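/- arXiv:1004.0425 — 4 statements merged into one kernel-verified Lean document; each statement's English description precedes it below -/
import Mathlib

section
/- Consider the two-period time-dependent quantum walk on ℤ with coin sequence U_{2s} = H₀, U_{2s+1} = H₁, where H_γ = [[cos θ_γ, sin θ_γ], [sin θ_γ, −cos θ_γ]] for γ = 0,1, with θ_γ ≠ nπ/2 for all n ∈ ℤ and θ₀ ≠ θ₁. Then for every r ∈ ℕ, the r-th moment of X_{2t}/(2t) converges: lim_{t→∞} E((X_{2t}/2t)^r) = ∫_{−|c_ξ|}^{|c_ξ|} x^r f(x) dx, where |c_ξ| = min{|cos θ₀|, |cos θ₁|} and f(x) = f_K(x; c_ξ) · [1 − (|α|² − |β|² + (α·conj(β) + conj(α)·β)·(sin θ₀ / cos θ₀))·x]. -/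
open MeasureTheory Complex Filter

noncomputable section

/-- The Konno density function `f_K(x; a)`; only `|a|` matters. -/
def konnoDensity (a x : ℝ) : ℝ :=
  if |x| < |a| then
    Real.sqrt (1 - |a| ^ 2) / (Real.pi * (1 - x ^ 2) * Real.sqrt (|a| ^ 2 - x ^ 2))
  else 0

/-- Time evolution of a time-dependent discrete-time quantum walk on `ℤ`:
`ψ_{t+1}(x) = P_t ψ_t(x+1) + Q_t ψ_t(x-1)`, where `P_t`/`Q_t` are the top/bottom
row parts of the coin `U t`. -/
def QWEvolves (U : ℕ → Matrix (Fin 2) (Fin 2) ℂ) (ψ : ℕ → ℤ → Fin 2 → ℂ) : Prop :=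
  ∀ t : ℕ, ∀ x : ℤ,
    ψ (t + 1) x 0 = U t 0 0 * ψ t (x + 1) 0 + U t 0 1 * ψ t (x + 1) 1 ∧
    ψ (t + 1) x 1 = U t 1 0 * ψ t (x - 1) 0 + U t 1 1 * ψ t (x - 1) 1

/-- Initial state `ψ₀(0) = ᵀ(α, β)`, `ψ₀(x) = 0` for `x ≠ 0`. -/
def QWInit (α β : ℂ) (ψ : ℕ → ℤ → Fin 2 → ℂ) : Prop :=
  ψ 0 0 0 = α ∧ ψ 0 0 1 = β ∧ ∀ x : ℤ, x ≠ 0 → (ψ 0 x 0 = 0 ∧ ψ 0 x 1 = 0)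

/-- `P(X_t = x) = ‖ψ_t(x)‖²`. -/
def qwProb (ψ : ℕ → ℤ → Fin 2 → ℂ) (t : ℕ) (x : ℤ) : ℝ :=
  Complex.normSq (ψ t x 0) + Complex.normSq (ψ t x 1)

/-- The law of `X_t / t`: `μ_t = Σ_{x ∈ ℤ} P(X_t = x) δ_{x/t}`. -/
def qwMeasure (ψ : ℕ → ℤ → Fin 2 → ℂ) (t : ℕ) : Measure ℝ :=
  Measure.sum fun x : ℤ => ENNReal.ofReal (qwProb ψ t x) • Measure.dirac ((x : ℝ) / (t : ℝ))

/-- Weak convergence of `X_t / t` to the law with density `f`. -/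
def qwWeakLimit (ψ : ℕ → ℤ → Fin 2 → ℂ) (f : ℝ → ℝ) : Prop :=
  ∀ g : BoundedContinuousFunction ℝ ℝ,
    Tendsto (fun t : ℕ => ∫ y, g y ∂ qwMeasure ψ t) atTop (nhds (∫ y, g y * f y))

/-- `R(k) = diag(e^{ik}, e^{-ik})`. -/
def Rmat (k : ℝ) : Matrix (Fin 2) (Fin 2) ℂ :=
  !![Complex.exp (Complex.I * k), 0; 0, Complex.exp (-(Complex.I * k))]

/-- `H_γ = [[cos θ, sin θ], [sin θ, -cos θ]]` as a complex matrix. -/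
def Hcoin (θ : ℝ) : Matrix (Fin 2) (Fin 2) ℂ :=
  !![(Real.cos θ : ℂ), (Real.sin θ : ℂ); (Real.sin θ : ℂ), (-(Real.cos θ) : ℂ)]

namespace TwoPeriodQW

/-- Fourier transform of one component of the amplitude at time `t`. -/
def fourierAmp (ψ : ℕ → ℤ → Fin 2 → ℂ) (t : ℕ) (i : Fin 2) (k : ℝ) : ℂ :=
  ∑' x : ℤ, Complex.exp (-(Complex.I * k * x)) * ψ t x i

lemma amp_eq_zero {α β : ℂ} {U : ℕ → Matrix (Fin 2) (Fin 2) ℂ} {ψ : ℕ → ℤ → Fin 2 → ℂ}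
    (hinit : QWInit α β ψ) (hevol : QWEvolves U ψ) (t : ℕ) (x : ℤ) (hx : (t : ℤ) < |x|)
    (i : Fin 2) : ψ t x i = 0 := by
  induction t generalizing x i with
  | zero =>
    have hx0 : x ≠ 0 := by
      rintro rfl
      simp at hx
    have h := hinit.2.2 x hx0
    fin_cases i
    · exact h.1
    · exact h.2
  | succ t ih =>
    have h := hevol t x
    have h1 : (t : ℤ) < |x + 1| := by push_cast at hx; grind
    have h2 : (t : ℤ) < |x - 1| := by push_cast at hx; grind
    fin_cases i
    · simpa [ih _ h1] using h.1
    · simpa [ih _ h2] using h.2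

lemma amp_eq_zero_of_notMem {α β : ℂ} {U : ℕ → Matrix (Fin 2) (Fin 2) ℂ}
    {ψ : ℕ → ℤ → Fin 2 → ℂ} (hinit : QWInit α β ψ) (hevol : QWEvolves U ψ) (t : ℕ) (x : ℤ)
    (hx : x ∉ Finset.Icc (-(t : ℤ)) t) (i : Fin 2) : ψ t x i = 0 := by
  apply amp_eq_zero hinit hevol
  rw [Finset.mem_Icc] at hx
  grind

lemma fourierAmp_eq_sum {α β : ℂ} {U : ℕ → Matrix (Fin 2) (Fin 2) ℂ}
    {ψ : ℕ → ℤ → Fin 2 → ℂ} (hinit : QWInit α β ψ) (hevol : QWEvolves U ψ) (t : ℕ) (i : Fin 2)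
    (k : ℝ) : fourierAmp ψ t i k =
      ∑ x ∈ Finset.Icc (-(t : ℤ)) t, Complex.exp (-(Complex.I * k * x)) * ψ t x i :=
  tsum_eq_sum fun x hx => by rw [amp_eq_zero_of_notMem hinit hevol t x hx i, mul_zero]

lemma summable_fourierAmp {α β : ℂ} {U : ℕ → Matrix (Fin 2) (Fin 2) ℂ}
    {ψ : ℕ → ℤ → Fin 2 → ℂ} (hinit : QWInit α β ψ) (hevol : QWEvolves U ψ) (t : ℕ) (i : Fin 2)
    (k : ℝ) : Summable fun x : ℤ => Complex.exp (-(Complex.I * k * x)) * ψ t x i :=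
  summable_of_ne_finset_zero (s := Finset.Icc (-(t : ℤ)) t) fun x hx => by
    rw [amp_eq_zero_of_notMem hinit hevol t x hx i, mul_zero]

lemma fourierAmp_zero {α β : ℂ} {ψ : ℕ → ℤ → Fin 2 → ℂ} (hinit : QWInit α β ψ) (k : ℝ) :
    fourierAmp ψ 0 0 k = α ∧ fourierAmp ψ 0 1 k = β := by
  unfold fourierAmp
  constructor
  · rw [tsum_eq_single 0 fun x hx => by rw [(hinit.2.2 x hx).1, mul_zero]]
    simp [hinit.1]
  · rw [tsum_eq_single 0 fun x hx => by rw [(hinit.2.2 x hx).2, mul_zero]]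
    simp [hinit.2.1]

lemma fourierAmp_succ {α β : ℂ} {U : ℕ → Matrix (Fin 2) (Fin 2) ℂ}
    {ψ : ℕ → ℤ → Fin 2 → ℂ} (hinit : QWInit α β ψ) (hevol : QWEvolves U ψ) (t : ℕ) (k : ℝ) :
    fourierAmp ψ (t + 1) 0 k = Complex.exp (Complex.I * k) *
        (U t 0 0 * fourierAmp ψ t 0 k + U t 0 1 * fourierAmp ψ t 1 k) ∧
    fourierAmp ψ (t + 1) 1 k = Complex.exp (-(Complex.I * k)) *
        (U t 1 0 * fourierAmp ψ t 0 k + U t 1 1 * fourierAmp ψ t 1 k) := by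
  have hs := fun i => summable_fourierAmp hinit hevol t i k
  have key : ∀ p q : ℂ, ∑' x : ℤ, Complex.exp (-(Complex.I * k * x)) *
      (p * ψ t x 0 + q * ψ t x 1) = p * fourierAmp ψ t 0 k + q * fourierAmp ψ t 1 k := by
    intro p q
    unfold fourierAmp
    rw [← tsum_mul_left, ← tsum_mul_left,
      ← ((hs 0).mul_left p).tsum_add ((hs 1).mul_left q)]
    exact tsum_congr fun x => by ring
  constructor
  · rw [← key, ← tsum_mul_left, ← (Equiv.addRight (1 : ℤ)).tsum_eq]
    refine tsum_congr fun x => ?_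
    rw [(hevol t x).1, Equiv.coe_addRight, ← mul_assoc, ← Complex.exp_add]
    congr 2
    push_cast
    ring
  · rw [← key, ← tsum_mul_left, ← (Equiv.addRight (-1 : ℤ)).tsum_eq]
    refine tsum_congr fun x => ?_
    rw [(hevol t x).2, Equiv.coe_addRight, ← mul_assoc, ← Complex.exp_add, ← sub_eq_add_neg]
    congr 2
    push_cast
    ring

lemma integral_exp_int_mul (n : ℤ) :
    ∫ k in (0 : ℝ)..2 * Real.pi, Complex.exp (Complex.I * n * k) =
      if n = 0 then 2 * (Real.pi : ℂ) else 0 := by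
  split_ifs with h
  · simp [h]
  · have hc : Complex.I * (n : ℂ) ≠ 0 := mul_ne_zero Complex.I_ne_zero (by exact_mod_cast h)
    rw [integral_exp_mul_complex hc]
    have : Complex.I * (n : ℂ) * ((2 * Real.pi : ℝ) : ℂ) = n * (2 * Real.pi * Complex.I) := by
      push_cast
      ring
    rw [this, Complex.exp_int_mul_two_pi_mul_I]
    simp

lemma integral_conj_mul_shift (s : Finset ℤ) (A : ℤ → ℂ) (h : ℝ) :
    ∫ k in (0 : ℝ)..2 * Real.pi,
      (starRingEnd ℂ) (∑ x ∈ s, Complex.exp (-(Complex.I * k * x)) * A x) *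
        ∑ x ∈ s, Complex.exp (-(Complex.I * (k + h : ℝ) * x)) * A x =
      2 * Real.pi * ∑ x ∈ s, Complex.exp (-(Complex.I * h * x)) * (Complex.normSq (A x) : ℂ) := by
  have hexp : ∀ k : ℝ, (starRingEnd ℂ) (∑ x ∈ s, Complex.exp (-(Complex.I * k * x)) * A x) *
        ∑ x ∈ s, Complex.exp (-(Complex.I * (k + h : ℝ) * x)) * A x =
      ∑ x ∈ s, ∑ y ∈ s, (starRingEnd ℂ) (A x) * A y * Complex.exp (-(Complex.I * h * y)) *
        Complex.exp (Complex.I * ((x - y : ℤ) : ℂ) * k) := by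
    intro k
    rw [map_sum, Finset.sum_mul_sum]
    refine Finset.sum_congr rfl fun x _ => Finset.sum_congr rfl fun y _ => ?_
    have e1 : (starRingEnd ℂ) (Complex.exp (-(Complex.I * k * x))) =
        Complex.exp (Complex.I * k * x) := by
      rw [← Complex.exp_conj]
      simp
    rw [map_mul, e1]
    have e2 : Complex.exp (Complex.I * k * x) * Complex.exp (-(Complex.I * (k + h : ℝ) * y)) =
        Complex.exp (-(Complex.I * h * y)) * Complex.exp (Complex.I * ((x - y : ℤ) : ℂ) * k) := by
      rw [← Complex.exp_add, ← Complex.exp_add]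
      congr 1
      push_cast
      ring
    linear_combination (starRingEnd ℂ) (A x) * A y * e2
  simp_rw [hexp]
  rw [intervalIntegral.integral_finsetSum fun x _ =>
    Continuous.intervalIntegrable (by fun_prop) _ _, Finset.mul_sum]
  refine Finset.sum_congr rfl fun x hx => ?_
  rw [intervalIntegral.integral_finsetSum fun y _ =>
    Continuous.intervalIntegrable (by fun_prop) _ _]
  simp_rw [intervalIntegral.integral_const_mul, integral_exp_int_mul]
  rw [Finset.sum_eq_single x]
  · rw [Complex.normSq_eq_conj_mul_self]
    simp
    ring
  · intro y _ hy
    rw [if_neg (sub_ne_zero.mpr hy.symm), mul_zero]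
  · exact fun h => absurd hx h

/-- The cosine of the quasi-energy of the two-step evolution. -/
def cosEnergy (θ₀ θ₁ k : ℝ) : ℝ :=
  Real.cos θ₀ * Real.cos θ₁ * Real.cos (2 * k) + Real.sin θ₀ * Real.sin θ₁

/-- The sine of the quasi-energy of the two-step evolution. -/
def sinEnergy (θ₀ θ₁ k : ℝ) : ℝ := Real.sqrt (1 - cosEnergy θ₀ θ₁ k ^ 2)

/-- The group velocity per step. -/
def velocity (θ₀ θ₁ k : ℝ) : ℝ :=
  Real.cos θ₀ * Real.cos θ₁ * Real.sin (2 * k) / sinEnergy θ₀ θ₁ k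

/-- The off-diagonal entry of the Hermitian involution `N(k)` for which the two-step evolution
is `cos ω + i sin ω N(k)`; the diagonal entries are `± velocity`. -/
def offDiag (θ₀ θ₁ k : ℝ) : ℂ :=
  (Complex.exp (2 * k * Complex.I) * (Real.cos θ₁ * Real.sin θ₀ : ℝ) -
    (Real.sin θ₁ * Real.cos θ₀ : ℝ)) / (Complex.I * sinEnergy θ₀ θ₁ k)

lemma abs_cosEnergy_lt_one {θ₀ θ₁ k : ℝ} (h₀ : Real.cos θ₀ ≠ 0) (h₁ : Real.cos θ₁ ≠ 0)
    (hk : Real.sin (2 * k) ≠ 0) : cosEnergy θ₀ θ₁ k ^ 2 < 1 := by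
  have hs := Real.sin_sq_add_cos_sq (2 * k)
  have e₀ := Real.sin_sq_add_cos_sq θ₀
  have e₁ := Real.sin_sq_add_cos_sq θ₁
  have hpos : 0 < (Real.cos θ₀ * Real.cos θ₁ * Real.sin (2 * k)) ^ 2 := by positivity
  unfold cosEnergy
  set c := Real.cos (2 * k)
  set s := Real.sin (2 * k)
  have key : 1 - (Real.cos θ₀ * Real.cos θ₁ * c + Real.sin θ₀ * Real.sin θ₁) ^ 2 =
      (Real.cos θ₀ * Real.cos θ₁ * s) ^ 2 + (Real.cos θ₁ * Real.sin θ₀ * c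
        - Real.sin θ₁ * Real.cos θ₀) ^ 2 + (Real.cos θ₁ * Real.sin θ₀ * s) ^ 2 := by
    have e1 : s ^ 2 = 1 - c ^ 2 := by linarith
    have e2 : Real.sin θ₀ ^ 2 = 1 - Real.cos θ₀ ^ 2 := by linarith
    have e3 : Real.sin θ₁ ^ 2 = 1 - Real.cos θ₁ ^ 2 := by linarith
    ring_nf
    rw [e1, e2, e3]
    ring
  nlinarith [sq_nonneg (Real.cos θ₁ * Real.sin θ₀ * c - Real.sin θ₁ * Real.cos θ₀),
    sq_nonneg (Real.cos θ₁ * Real.sin θ₀ * s)]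

lemma sinEnergy_pos {θ₀ θ₁ k : ℝ} (h₀ : Real.cos θ₀ ≠ 0) (h₁ : Real.cos θ₁ ≠ 0)
    (hk : Real.sin (2 * k) ≠ 0) : 0 < sinEnergy θ₀ θ₁ k :=
  Real.sqrt_pos.mpr (by linarith [abs_cosEnergy_lt_one h₀ h₁ hk])

lemma velocity_sq_add_normSq_offDiag {θ₀ θ₁ k : ℝ} (hS : 0 < sinEnergy θ₀ θ₁ k) :
    velocity θ₀ θ₁ k ^ 2 + Complex.normSq (offDiag θ₀ θ₁ k) = 1 := by
  have hs := Real.sin_sq_add_cos_sq (2 * k)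
  have e₀ := Real.sin_sq_add_cos_sq θ₀
  have e₁ := Real.sin_sq_add_cos_sq θ₁
  have hS2 : sinEnergy θ₀ θ₁ k ^ 2 = 1 - cosEnergy θ₀ θ₁ k ^ 2 :=
    Real.sq_sqrt (Real.sqrt_pos.mp hS).le
  have hexp : Complex.exp (2 * k * Complex.I) = Real.cos (2 * k) + Real.sin (2 * k) * Complex.I := by
    rw [Complex.exp_mul_I]
    push_cast
    rfl
  have hnum : Complex.normSq (Complex.exp (2 * k * Complex.I) *
      (Real.cos θ₁ * Real.sin θ₀ : ℝ) - (Real.sin θ₁ * Real.cos θ₀ : ℝ)) =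
      (Real.cos (2 * k) * (Real.cos θ₁ * Real.sin θ₀) - Real.sin θ₁ * Real.cos θ₀) ^ 2 +
        (Real.sin (2 * k) * (Real.cos θ₁ * Real.sin θ₀)) ^ 2 := by
    have : Complex.exp (2 * k * Complex.I) *
      (Real.cos θ₁ * Real.sin θ₀ : ℝ) - (Real.sin θ₁ * Real.cos θ₀ : ℝ) =
      ((Real.cos (2 * k) * (Real.cos θ₁ * Real.sin θ₀) - Real.sin θ₁ * Real.cos θ₀ : ℝ) : ℂ) +
        ((Real.sin (2 * k) * (Real.cos θ₁ * Real.sin θ₀) : ℝ) : ℂ) * Complex.I := by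
      rw [hexp]
      push_cast
      ring
    rw [this, Complex.normSq_add_mul_I]
  unfold velocity offDiag
  rw [Complex.normSq_div, hnum, Complex.normSq_mul, Complex.normSq_I, one_mul,
    Complex.normSq_ofReal, ← pow_two, div_pow, ← add_div, div_eq_one_iff_eq (by positivity), hS2]
  unfold cosEnergy
  set c := Real.cos (2 * k)
  set s := Real.sin (2 * k)
  have e1 : s ^ 2 = 1 - c ^ 2 := by linarith
  have e2 : Real.sin θ₀ ^ 2 = 1 - Real.cos θ₀ ^ 2 := by linarith
  have e3 : Real.sin θ₁ ^ 2 = 1 - Real.cos θ₁ ^ 2 := by linarith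
  ring_nf
  rw [e1, e2, e3]
  ring

lemma sinEnergy_eq_zero_or_pos (θ₀ θ₁ k : ℝ) :
    sinEnergy θ₀ θ₁ k = 0 ∨ 0 < sinEnergy θ₀ θ₁ k :=
  (Real.sqrt_nonneg _).eq_or_lt.imp Eq.symm id

lemma velocity_sq_add_normSq_offDiag_le (θ₀ θ₁ k : ℝ) :
    velocity θ₀ θ₁ k ^ 2 + Complex.normSq (offDiag θ₀ θ₁ k) ≤ 1 := by
  rcases sinEnergy_eq_zero_or_pos θ₀ θ₁ k with h | h
  · simp [velocity, offDiag, h]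
  · exact (velocity_sq_add_normSq_offDiag h).le

lemma abs_velocity_le (θ₀ θ₁ k : ℝ) : |velocity θ₀ θ₁ k| ≤ 1 := by
  rw [← sq_le_one_iff_abs_le_one]
  linarith [velocity_sq_add_normSq_offDiag_le θ₀ θ₁ k,
    Complex.normSq_nonneg (offDiag θ₀ θ₁ k)]

lemma norm_offDiag_le (θ₀ θ₁ k : ℝ) : ‖offDiag θ₀ θ₁ k‖ ≤ 1 := by
  have h := velocity_sq_add_normSq_offDiag_le θ₀ θ₁ k
  rw [Complex.normSq_eq_norm_sq] at h
  nlinarith [sq_nonneg (velocity θ₀ θ₁ k), norm_nonneg (offDiag θ₀ θ₁ k)]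

/-- The vector `N(k) (α, β)`. -/
def spin (θ₀ θ₁ : ℝ) (α β : ℂ) (k : ℝ) : Fin 2 → ℂ :=
  ![velocity θ₀ θ₁ k * α + offDiag θ₀ θ₁ k * β,
    (starRingEnd ℂ) (offDiag θ₀ θ₁ k) * α - velocity θ₀ θ₁ k * β]

/-- The expectation of `N(k)` in the state `(α, β)`. -/
def spinMean (θ₀ θ₁ : ℝ) (α β : ℂ) (k : ℝ) : ℝ :=
  velocity θ₀ θ₁ k * (Complex.normSq α - Complex.normSq β) +
    2 * ((starRingEnd ℂ) α * β * offDiag θ₀ θ₁ k).re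

/-- The quasi-energy. -/
def energy (θ₀ θ₁ k : ℝ) : ℝ := Real.arccos (cosEnergy θ₀ θ₁ k)

lemma cos_energy {θ₀ θ₁ k : ℝ} (hS : 0 < sinEnergy θ₀ θ₁ k) :
    Real.cos (energy θ₀ θ₁ k) = cosEnergy θ₀ θ₁ k := by
  have h : cosEnergy θ₀ θ₁ k ^ 2 < 1 := by
    have := Real.sqrt_pos.mp hS
    linarith
  have h' := abs_lt.mp ((sq_lt_one_iff_abs_lt_one _).mp h)
  exact Real.cos_arccos h'.1.le h'.2.le

lemma sin_energy (θ₀ θ₁ k : ℝ) : Real.sin (energy θ₀ θ₁ k) = sinEnergy θ₀ θ₁ k :=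
  Real.sin_arccos _

lemma fourierAmp_two_step {θ₀ θ₁ : ℝ} {α β : ℂ} {ψ : ℕ → ℤ → Fin 2 → ℂ}
    (hinit : QWInit α β ψ)
    (hevol : QWEvolves (fun t => if Even t then Hcoin θ₀ else Hcoin θ₁) ψ) {k : ℝ}
    (hS : 0 < sinEnergy θ₀ θ₁ k) (t : ℕ) :
    fourierAmp ψ (2 * (t + 1)) 0 k =
        (cosEnergy θ₀ θ₁ k + Complex.I * sinEnergy θ₀ θ₁ k * velocity θ₀ θ₁ k) *
          fourierAmp ψ (2 * t) 0 k +
        Complex.I * sinEnergy θ₀ θ₁ k * offDiag θ₀ θ₁ k * fourierAmp ψ (2 * t) 1 k ∧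
    fourierAmp ψ (2 * (t + 1)) 1 k =
        Complex.I * sinEnergy θ₀ θ₁ k * (starRingEnd ℂ) (offDiag θ₀ θ₁ k) *
          fourierAmp ψ (2 * t) 0 k +
        (cosEnergy θ₀ θ₁ k - Complex.I * sinEnergy θ₀ θ₁ k * velocity θ₀ θ₁ k) *
          fourierAmp ψ (2 * t) 1 k := by
  have hne : (sinEnergy θ₀ θ₁ k : ℂ) ≠ 0 := by exact_mod_cast hS.ne'
  have hv : Complex.I * sinEnergy θ₀ θ₁ k * velocity θ₀ θ₁ k =
      Complex.I * (Real.cos θ₀ * Real.cos θ₁ * Real.sin (2 * k) : ℝ) := by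
    unfold velocity
    push_cast
    field_simp
  have hn : Complex.I * sinEnergy θ₀ θ₁ k * offDiag θ₀ θ₁ k =
      Complex.exp (2 * k * Complex.I) * (Real.cos θ₁ * Real.sin θ₀ : ℝ) -
        (Real.sin θ₁ * Real.cos θ₀ : ℝ) := by
    unfold offDiag
    field_simp
  have hn' : Complex.I * sinEnergy θ₀ θ₁ k * (starRingEnd ℂ) (offDiag θ₀ θ₁ k) =
      -(Complex.exp (-(2 * k * Complex.I)) * (Real.cos θ₁ * Real.sin θ₀ : ℝ) -
        (Real.sin θ₁ * Real.cos θ₀ : ℝ)) := by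
    have := congrArg (starRingEnd ℂ) hn
    simp only [map_mul, map_sub, Complex.conj_I, Complex.conj_ofReal, ← Complex.exp_conj] at this
    have h2 : (starRingEnd ℂ) 2 = 2 := Complex.conj_ofNat 2
    rw [h2] at this
    rw [show -(2 * (k : ℂ) * Complex.I) = 2 * (k : ℂ) * -Complex.I by ring, ← this]
    ring
  have hev : Even (2 * t) := even_two_mul t
  have hodd : ¬ Even (2 * t + 1) := by simp
  obtain ⟨a0, a1⟩ := fourierAmp_succ hinit hevol (2 * t) k
  obtain ⟨b0, b1⟩ := fourierAmp_succ hinit hevol (2 * t + 1) k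
  simp only [hev, hodd, if_true, if_false] at a0 a1 b0 b1
  rw [a0, a1] at b0 b1
  rw [hn, hn', hv, show 2 * (t + 1) = 2 * t + 1 + 1 by ring, b0, b1]
  have E1 : Complex.exp (Complex.I * k) * Complex.exp (-(Complex.I * k)) = 1 := by
    rw [← Complex.exp_add]
    simp
  have E2 : Complex.exp (Complex.I * k) ^ 2 = Complex.exp (2 * k * Complex.I) := by
    rw [← Complex.exp_nat_mul]
    congr 1
    push_cast
    ring
  have E3 : Complex.exp (-(Complex.I * k)) ^ 2 = Complex.exp (-(2 * k * Complex.I)) := by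
    rw [← Complex.exp_nat_mul]
    congr 1
    push_cast
    ring
  have C1 : Complex.exp (2 * k * Complex.I) = Complex.cos (2 * k) + Complex.sin (2 * k) * Complex.I :=
    Complex.exp_mul_I _
  have C2 : Complex.exp (-(2 * k * Complex.I)) =
      Complex.cos (2 * k) - Complex.sin (2 * k) * Complex.I := by
    rw [← neg_mul, Complex.exp_mul_I, Complex.cos_neg, Complex.sin_neg]
    ring
  simp only [Hcoin, cosEnergy, Matrix.of_apply, Matrix.cons_val', Matrix.cons_val_zero,
    Matrix.cons_val_one, Matrix.cons_val_fin_one]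
  push_cast
  generalize fourierAmp ψ (2 * t) 0 k = X
  generalize fourierAmp ψ (2 * t) 1 k = Y
  generalize Complex.exp (Complex.I * k) = e at *
  generalize Complex.exp (-(Complex.I * k)) = f at *
  rw [C1] at E2 ⊢
  rw [C2] at E3 ⊢
  constructor
  · linear_combination (Complex.cos θ₁ * (Complex.cos θ₀ * X + Complex.sin θ₀ * Y)) * E2 +
      (Complex.sin θ₁ * (Complex.sin θ₀ * X - Complex.cos θ₀ * Y)) * E1
  · linear_combination (Complex.sin θ₁ * (Complex.cos θ₀ * X + Complex.sin θ₀ * Y)) * E1 -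
      (Complex.cos θ₁ * (Complex.sin θ₀ * X - Complex.cos θ₀ * Y)) * E3

lemma fourierAmp_eq {θ₀ θ₁ : ℝ} {α β : ℂ} {ψ : ℕ → ℤ → Fin 2 → ℂ}
    (hinit : QWInit α β ψ)
    (hevol : QWEvolves (fun t => if Even t then Hcoin θ₀ else Hcoin θ₁) ψ) {k : ℝ}
    (hS : 0 < sinEnergy θ₀ θ₁ k) (t : ℕ) (i : Fin 2) :
    fourierAmp ψ (2 * t) i k = Real.cos (t * energy θ₀ θ₁ k) * ![α, β] i +
      Complex.I * Real.sin (t * energy θ₀ θ₁ k) * spin θ₀ θ₁ α β k i := by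
  induction t generalizing i with
  | zero =>
    fin_cases i
    · simp [(fourierAmp_zero hinit k).1]
    · simp [(fourierAmp_zero hinit k).2]
  | succ t ih =>
    obtain ⟨h0, h1⟩ := fourierAmp_two_step hinit hevol hS t
    have hnorm : (velocity θ₀ θ₁ k : ℂ) ^ 2 +
        (starRingEnd ℂ) (offDiag θ₀ θ₁ k) * offDiag θ₀ θ₁ k = 1 := by
      rw [← Complex.normSq_eq_conj_mul_self]
      exact_mod_cast velocity_sq_add_normSq_offDiag hS
    have hc : Real.cos ((t + 1 : ℕ) * energy θ₀ θ₁ k) =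
        Real.cos (t * energy θ₀ θ₁ k) * cosEnergy θ₀ θ₁ k -
          Real.sin (t * energy θ₀ θ₁ k) * sinEnergy θ₀ θ₁ k := by
      rw [← cos_energy hS, ← sin_energy, ← Real.cos_add]
      push_cast
      ring_nf
    have hs : Real.sin ((t + 1 : ℕ) * energy θ₀ θ₁ k) =
        Real.sin (t * energy θ₀ θ₁ k) * cosEnergy θ₀ θ₁ k +
          Real.cos (t * energy θ₀ θ₁ k) * sinEnergy θ₀ θ₁ k := by
      rw [← cos_energy hS, ← sin_energy, ← Real.sin_add]
      push_cast
      ring_nf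
    rw [ih 0, ih 1] at h0 h1
    rw [hc, hs]
    push_cast only [Complex.ofReal_sub, Complex.ofReal_mul, Complex.ofReal_add]
    generalize ((Real.cos (t * energy θ₀ θ₁ k) : ℝ) : ℂ) = C at *
    generalize ((Real.sin (t * energy θ₀ θ₁ k) : ℝ) : ℂ) = S at *
    simp only [spin, Matrix.cons_val_zero, Matrix.cons_val_one] at h0 h1
    fin_cases i
    · simp only [spin, Fin.zero_eta, Matrix.cons_val_zero]
      rw [h0]
      linear_combination (-(sinEnergy θ₀ θ₁ k : ℂ) * S * α) * hnorm +
        (sinEnergy θ₀ θ₁ k * S * (velocity θ₀ θ₁ k * (velocity θ₀ θ₁ k * α +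
          offDiag θ₀ θ₁ k * β) + offDiag θ₀ θ₁ k * ((starRingEnd ℂ) (offDiag θ₀ θ₁ k) * α -
          velocity θ₀ θ₁ k * β))) * Complex.I_sq
    · simp only [spin, Fin.mk_one, Matrix.cons_val_one, Matrix.cons_val_fin_one]
      rw [h1]
      linear_combination (-(sinEnergy θ₀ θ₁ k : ℂ) * S * β) * hnorm +
        (sinEnergy θ₀ θ₁ k * S * ((starRingEnd ℂ) (offDiag θ₀ θ₁ k) * (velocity θ₀ θ₁ k * α +
          offDiag θ₀ θ₁ k * β) - velocity θ₀ θ₁ k * ((starRingEnd ℂ) (offDiag θ₀ θ₁ k) * α -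
          velocity θ₀ θ₁ k * β))) * Complex.I_sq

lemma normSq_fourierAmp {θ₀ θ₁ : ℝ} {α β : ℂ} {ψ : ℕ → ℤ → Fin 2 → ℂ}
    (hinit : QWInit α β ψ) (hαβ : Complex.normSq α + Complex.normSq β = 1)
    (hevol : QWEvolves (fun t => if Even t then Hcoin θ₀ else Hcoin θ₁) ψ) (t : ℕ) (k : ℝ) :
    Complex.normSq (fourierAmp ψ t 0 k) + Complex.normSq (fourierAmp ψ t 1 k) = 1 := by
  induction t with
  | zero => rw [(fourierAmp_zero hinit k).1, (fourierAmp_zero hinit k).2, hαβ]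
  | succ t ih =>
    obtain ⟨h0, h1⟩ := fourierAmp_succ hinit hevol t k
    have hcoin : ∃ θ : ℝ, (if Even t then Hcoin θ₀ else Hcoin θ₁) = Hcoin θ := by
      split_ifs
      exacts [⟨_, rfl⟩, ⟨_, rfl⟩]
    obtain ⟨θ, hθ⟩ := hcoin
    have E1 : Complex.normSq (Complex.exp (Complex.I * k)) = 1 := by
      rw [Complex.normSq_eq_norm_sq, mul_comm, Complex.norm_exp_ofReal_mul_I, one_pow]
    have E2 : Complex.normSq (Complex.exp (-(Complex.I * k))) = 1 := by
      rw [Complex.exp_neg, Complex.normSq_inv, E1, inv_one]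
    simp only [hθ] at h0 h1
    rw [h0, h1, Complex.normSq_mul, Complex.normSq_mul, E1, E2, one_mul, one_mul, ← ih]
    simp only [Hcoin, Matrix.of_apply, Matrix.cons_val', Matrix.cons_val_zero,
      Matrix.cons_val_one, Matrix.cons_val_fin_one]
    generalize fourierAmp ψ t 0 k = X
    generalize fourierAmp ψ t 1 k = Y
    have e := Real.sin_sq_add_cos_sq θ
    simp only [Complex.normSq_apply, Complex.add_re, Complex.add_im, Complex.re_ofReal_mul,
      Complex.im_ofReal_mul, ← Complex.ofReal_neg]
    linear_combination (X.re ^ 2 + X.im ^ 2 + Y.re ^ 2 + Y.im ^ 2) * e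

lemma norm_fourierAmp_le {θ₀ θ₁ : ℝ} {α β : ℂ} {ψ : ℕ → ℤ → Fin 2 → ℂ}
    (hinit : QWInit α β ψ) (hαβ : Complex.normSq α + Complex.normSq β = 1)
    (hevol : QWEvolves (fun t => if Even t then Hcoin θ₀ else Hcoin θ₁) ψ) (t : ℕ) (k : ℝ)
    (i : Fin 2) : ‖fourierAmp ψ t i k‖ ≤ 1 := by
  have h := normSq_fourierAmp hinit hαβ hevol t k
  rw [Complex.normSq_eq_norm_sq, Complex.normSq_eq_norm_sq] at h
  revert i
  rw [Fin.forall_fin_two]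
  constructor <;> rw [← sq_le_one_iff₀ (norm_nonneg _)] <;>
    linarith [sq_nonneg ‖fourierAmp ψ t 0 k‖, sq_nonneg ‖fourierAmp ψ t 1 k‖]

@[fun_prop]
lemma continuous_cosEnergy (θ₀ θ₁ : ℝ) : Continuous (cosEnergy θ₀ θ₁) := by
  unfold cosEnergy
  fun_prop

@[fun_prop]
lemma continuous_sinEnergy (θ₀ θ₁ : ℝ) : Continuous (sinEnergy θ₀ θ₁) := by
  unfold sinEnergy
  fun_prop

lemma continuousAt_velocity {θ₀ θ₁ k : ℝ} (hS : 0 < sinEnergy θ₀ θ₁ k) :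
    ContinuousAt (velocity θ₀ θ₁) k :=
  ContinuousAt.div (by fun_prop) (by fun_prop) hS.ne'

lemma continuousAt_offDiag {θ₀ θ₁ k : ℝ} (hS : 0 < sinEnergy θ₀ θ₁ k) :
    ContinuousAt (offDiag θ₀ θ₁) k :=
  ContinuousAt.div (by fun_prop) (by fun_prop)
    (mul_ne_zero Complex.I_ne_zero (by exact_mod_cast hS.ne'))

lemma continuousAt_spin {θ₀ θ₁ k : ℝ} (α β : ℂ) (hS : 0 < sinEnergy θ₀ θ₁ k) (i : Fin 2) :
    ContinuousAt (fun k => spin θ₀ θ₁ α β k i) k := by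
  have h1 := continuousAt_velocity hS
  have h2 := continuousAt_offDiag hS
  fin_cases i
  · change ContinuousAt (fun k => velocity θ₀ θ₁ k * α + offDiag θ₀ θ₁ k * β) k
    fun_prop
  · change ContinuousAt (fun k => (starRingEnd ℂ) (offDiag θ₀ θ₁ k) * α -
      velocity θ₀ θ₁ k * β) k
    have h3 : ContinuousAt (fun k => (starRingEnd ℂ) (offDiag θ₀ θ₁ k)) k :=
      Complex.continuous_conj.continuousAt.comp h2
    fun_prop

lemma hasDerivAt_energy {θ₀ θ₁ k : ℝ} (hS : 0 < sinEnergy θ₀ θ₁ k) :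
    HasDerivAt (energy θ₀ θ₁) (2 * velocity θ₀ θ₁ k) k := by
  have h : cosEnergy θ₀ θ₁ k ^ 2 < 1 := by
    have := Real.sqrt_pos.mp hS
    linarith
  have h' := abs_lt.mp ((sq_lt_one_iff_abs_lt_one _).mp h)
  have hc : HasDerivAt (cosEnergy θ₀ θ₁)
      (Real.cos θ₀ * Real.cos θ₁ * (-Real.sin (2 * k) * (2 * 1))) k :=
    ((((hasDerivAt_id' k).const_mul 2).cos).const_mul _).add_const _
  have := (Real.hasDerivAt_arccos h'.1.ne' h'.2.ne).comp k hc
  refine this.congr_deriv ?_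
  unfold velocity sinEnergy
  ring

lemma spin_inner (θ₀ θ₁ : ℝ) (α β : ℂ) (k : ℝ) :
    (starRingEnd ℂ) α * spin θ₀ θ₁ α β k 0 + (starRingEnd ℂ) β * spin θ₀ θ₁ α β k 1 =
      spinMean θ₀ θ₁ α β k := by
  simp only [spin, spinMean, Matrix.cons_val_zero, Matrix.cons_val_one, Matrix.cons_val_fin_one]
  have h : ((2 * ((starRingEnd ℂ) α * β * offDiag θ₀ θ₁ k).re : ℝ) : ℂ) =
      (starRingEnd ℂ) α * β * offDiag θ₀ θ₁ k +
        (starRingEnd ℂ) ((starRingEnd ℂ) α * β * offDiag θ₀ θ₁ k) := by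
    rw [Complex.add_conj]
  rw [Complex.ofReal_add, h]
  push_cast
  rw [Complex.normSq_eq_conj_mul_self, Complex.normSq_eq_conj_mul_self]
  simp only [map_mul, Complex.conj_conj]
  ring

lemma inner_spin (θ₀ θ₁ : ℝ) (α β : ℂ) (k : ℝ) :
    (starRingEnd ℂ) (spin θ₀ θ₁ α β k 0) * α + (starRingEnd ℂ) (spin θ₀ θ₁ α β k 1) * β =
      spinMean θ₀ θ₁ α β k := by
  have := congrArg (starRingEnd ℂ) (spin_inner θ₀ θ₁ α β k)
  simp only [map_add, map_mul, Complex.conj_conj, Complex.conj_ofReal] at this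
  rw [← this]
  ring

lemma normSq_spin {θ₀ θ₁ k : ℝ} {α β : ℂ} (hαβ : Complex.normSq α + Complex.normSq β = 1)
    (hS : 0 < sinEnergy θ₀ θ₁ k) :
    (starRingEnd ℂ) (spin θ₀ θ₁ α β k 0) * spin θ₀ θ₁ α β k 0 +
      (starRingEnd ℂ) (spin θ₀ θ₁ α β k 1) * spin θ₀ θ₁ α β k 1 = 1 := by
  have hnorm : (velocity θ₀ θ₁ k : ℂ) ^ 2 +
      (starRingEnd ℂ) (offDiag θ₀ θ₁ k) * offDiag θ₀ θ₁ k = 1 := by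
    rw [← Complex.normSq_eq_conj_mul_self]
    exact_mod_cast velocity_sq_add_normSq_offDiag hS
  have hφ : (starRingEnd ℂ) α * α + (starRingEnd ℂ) β * β = 1 := by
    rw [← Complex.normSq_eq_conj_mul_self, ← Complex.normSq_eq_conj_mul_self]
    exact_mod_cast hαβ
  simp only [spin, Matrix.cons_val_zero, Matrix.cons_val_one, Matrix.cons_val_fin_one, map_add,
    map_sub, map_mul, Complex.conj_ofReal, Complex.conj_conj]
  linear_combination ((starRingEnd ℂ) α * α + (starRingEnd ℂ) β * β) * hnorm + hφ

lemma tendsto_mul_energy_sub {θ₀ θ₁ k : ℝ} (hS : 0 < sinEnergy θ₀ θ₁ k) (ξ : ℝ) :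
    Tendsto (fun t : ℕ => t * (energy θ₀ θ₁ (k + -(ξ / (2 * t))) - energy θ₀ θ₁ k)) atTop
      (nhds (-(ξ * velocity θ₀ θ₁ k))) := by
  have hd : HasDerivAt (fun s : ℝ => energy θ₀ θ₁ (k + -(ξ / 2 * s)))
      (2 * velocity θ₀ θ₁ k * -(ξ / 2 * 1)) 0 := by
    have h1 : HasDerivAt (fun s : ℝ => k + -(ξ / 2 * s)) (-(ξ / 2 * 1)) 0 :=
      (((hasDerivAt_id' (0 : ℝ)).const_mul (ξ / 2)).neg).const_add k
    have h2 : HasDerivAt (energy θ₀ θ₁) (2 * velocity θ₀ θ₁ k) (k + -(ξ / 2 * 0)) := by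
      simpa using hasDerivAt_energy hS
    exact HasDerivAt.comp (h₂ := energy θ₀ θ₁) (0 : ℝ) h2 h1
  have hs := hd.tendsto_slope_zero
  have hlim : Tendsto (fun t : ℕ => ((t : ℝ))⁻¹) atTop (nhdsWithin 0 {0}ᶜ) := by
    rw [tendsto_nhdsWithin_iff]
    refine ⟨tendsto_inv_atTop_zero.comp tendsto_natCast_atTop_atTop, ?_⟩
    filter_upwards [eventually_gt_atTop 0] with t ht
    simpa using ht.ne'
  have := hs.comp hlim
  refine (this.congr fun t => ?_).trans_eq ?_
  · simp only [Function.comp, inv_inv, zero_add, smul_eq_mul, mul_zero, neg_zero, add_zero]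
    congr 4
    rw [← div_eq_mul_inv, div_div]
  · congr 1
    ring

lemma tendsto_inner_fourierAmp {θ₀ θ₁ : ℝ} (h₀ : Real.cos θ₀ ≠ 0) (h₁ : Real.cos θ₁ ≠ 0)
    {α β : ℂ} (hαβ : Complex.normSq α + Complex.normSq β = 1) {ψ : ℕ → ℤ → Fin 2 → ℂ}
    (hinit : QWInit α β ψ)
    (hevol : QWEvolves (fun t => if Even t then Hcoin θ₀ else Hcoin θ₁) ψ) {k : ℝ}
    (hk : Real.sin (2 * k) ≠ 0) (ξ : ℝ) :
    Tendsto (fun t : ℕ =>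
      (starRingEnd ℂ) (fourierAmp ψ (2 * t) 0 k) *
          fourierAmp ψ (2 * t) 0 (k + -(ξ / (2 * t))) +
        (starRingEnd ℂ) (fourierAmp ψ (2 * t) 1 k) *
          fourierAmp ψ (2 * t) 1 (k + -(ξ / (2 * t)))) atTop
      (nhds (Real.cos (ξ * velocity θ₀ θ₁ k) -
        Complex.I * Real.sin (ξ * velocity θ₀ θ₁ k) * spinMean θ₀ θ₁ α β k)) := by
  have hS := sinEnergy_pos h₀ h₁ hk
  have hφ : (starRingEnd ℂ) α * α + (starRingEnd ℂ) β * β = 1 := by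
    rw [← Complex.normSq_eq_conj_mul_self, ← Complex.normSq_eq_conj_mul_self]
    exact_mod_cast hαβ
  have hkt : Tendsto (fun t : ℕ => k + -(ξ / (2 * t))) atTop (nhds k) := by
    have : Tendsto (fun t : ℕ => ξ / 2 / (t : ℝ)) atTop (nhds 0) :=
      tendsto_const_div_atTop_nhds_zero_nat _
    simpa [div_div] using (this.neg).const_add k
  have hSt : ∀ᶠ t : ℕ in atTop, 0 < sinEnergy θ₀ θ₁ (k + -(ξ / (2 * t))) :=
    hkt.eventually ((continuous_sinEnergy θ₀ θ₁).continuousAt.eventually (lt_mem_nhds hS))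
  have hangle := tendsto_mul_energy_sub hS ξ
  have hmain : Tendsto (fun t : ℕ =>
      ((Real.cos (t * (energy θ₀ θ₁ (k + -(ξ / (2 * t))) - energy θ₀ θ₁ k)) : ℝ) : ℂ) +
      Complex.I * (Real.sin (t * (energy θ₀ θ₁ (k + -(ξ / (2 * t))) - energy θ₀ θ₁ k)) : ℝ) *
        spinMean θ₀ θ₁ α β k) atTop
      (nhds (Real.cos (ξ * velocity θ₀ θ₁ k) -
        Complex.I * Real.sin (ξ * velocity θ₀ θ₁ k) * spinMean θ₀ θ₁ α β k)) := by
    have hc : Continuous fun y : ℝ => ((Real.cos y : ℝ) : ℂ) +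
        Complex.I * (Real.sin y : ℝ) * spinMean θ₀ θ₁ α β k := by fun_prop
    refine ((hc.tendsto _).comp hangle).trans_eq ?_
    rw [Real.cos_neg, Real.sin_neg]
    push_cast
    ring_nf
  have herr : ∀ i, Tendsto (fun t : ℕ => (starRingEnd ℂ) (fourierAmp ψ (2 * t) i k) *
      (Complex.I * Real.sin (t * energy θ₀ θ₁ (k + -(ξ / (2 * t)))) *
        (spin θ₀ θ₁ α β (k + -(ξ / (2 * t))) i - spin θ₀ θ₁ α β k i))) atTop (nhds 0) := by
    intro i
    have hd : Tendsto (fun t : ℕ => ‖spin θ₀ θ₁ α β (k + -(ξ / (2 * t))) i -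
        spin θ₀ θ₁ α β k i‖) atTop (nhds 0) := by
      rw [← tendsto_iff_norm_sub_tendsto_zero]
      exact (continuousAt_spin α β hS i).tendsto.comp hkt
    refine squeeze_zero_norm (fun t => ?_) hd
    have hb := norm_fourierAmp_le hinit hαβ hevol (2 * t) k i
    have hs : ‖((Real.sin (t * energy θ₀ θ₁ (k + -(ξ / (2 * t)))) : ℝ) : ℂ)‖ ≤ 1 := by
      rw [Complex.norm_real]
      exact Real.abs_sin_le_one _
    rw [norm_mul, norm_mul, norm_mul, Complex.norm_I, one_mul, RCLike.norm_conj, ← mul_assoc]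
    exact mul_le_of_le_one_left (norm_nonneg _) (mul_le_one₀ hb (norm_nonneg _) hs)
  have hsum := (hmain.add (herr 0)).add (herr 1)
  rw [add_zero, add_zero] at hsum
  refine hsum.congr' ?_
  filter_upwards [hSt] with t ht
  have hA := fourierAmp_eq hinit hevol hS t
  have hB := fourierAmp_eq hinit hevol ht t
  rw [hB 0, hB 1, hA 0, hA 1, mul_sub, Real.cos_sub, Real.sin_sub]
  have i1 := spin_inner θ₀ θ₁ α β k
  have i2 := inner_spin θ₀ θ₁ α β k
  have i3 := normSq_spin (k := k) hαβ hS
  simp only [Complex.ofReal_add, Complex.ofReal_sub, Complex.ofReal_mul, map_add, map_mul,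
    Complex.conj_ofReal, Complex.conj_I, Matrix.cons_val_zero, Matrix.cons_val_one,
    Matrix.cons_val_fin_one]
  generalize ((Real.cos (t * energy θ₀ θ₁ k) : ℝ) : ℂ) = C
  generalize ((Real.sin (t * energy θ₀ θ₁ k) : ℝ) : ℂ) = S
  generalize ((Real.cos (t * energy θ₀ θ₁ (k + -(ξ / (2 * t)))) : ℝ) : ℂ) = C'
  generalize ((Real.sin (t * energy θ₀ θ₁ (k + -(ξ / (2 * t)))) : ℝ) : ℂ) = S'
  generalize spin θ₀ θ₁ α β k 0 = x at *
  generalize spin θ₀ θ₁ α β k 1 = y at *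
  linear_combination (-(C * C')) * hφ + (-(C * S' * Complex.I)) * i1 +
    (S * C' * Complex.I) * i2 + (-(S * S')) * i3 +
    (S * S' * ((starRingEnd ℂ) x * x + (starRingEnd ℂ) y * y)) * Complex.I_sq

instance fact_two_pi_pos : Fact (0 < 2 * Real.pi) := ⟨Real.two_pi_pos⟩

lemma tendsto_of_tendsto_fourier {ι : Type*} {l : Filter ι}
    (Λ : ι → C(AddCircle (2 * Real.pi), ℂ) →ₗ[ℂ] ℂ) (Λ' : C(AddCircle (2 * Real.pi), ℂ) →ₗ[ℂ] ℂ)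
    {K : ℝ} (hK : ∀ i f, ‖Λ i f‖ ≤ K * ‖f‖) (hK' : ∀ f, ‖Λ' f‖ ≤ K * ‖f‖)
    (h : ∀ n : ℤ, Tendsto (fun i => Λ i (fourier n)) l (nhds (Λ' (fourier n))))
    (f : C(AddCircle (2 * Real.pi), ℂ)) :
    Tendsto (fun i => Λ i f) l (nhds (Λ' f)) := by
  have hspan : ∀ g ∈ Submodule.span ℂ (Set.range (fourier (T := 2 * Real.pi))),
      Tendsto (fun i => Λ i g) l (nhds (Λ' g)) := by
    intro g hg
    induction hg using Submodule.span_induction with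
    | mem x hx =>
      obtain ⟨n, rfl⟩ := hx
      exact h n
    | zero => simpa using tendsto_const_nhds
    | add x y _ _ hx hy => simpa using hx.add hy
    | smul c x _ hx => simpa using hx.const_mul c
  have hf : f ∈ closure (Submodule.span ℂ (Set.range (fourier (T := 2 * Real.pi))) :
      Set C(AddCircle (2 * Real.pi), ℂ)) := by
    rw [← Submodule.topologicalClosure_coe, span_fourier_closure_eq_top]
    trivial
  rw [Metric.tendsto_nhds]
  intro ε hε
  obtain ⟨g, hg, hfg⟩ := Metric.mem_closure_iff.mp hf (ε / (4 * (|K| + 1))) (by positivity)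
  filter_upwards [Metric.tendsto_nhds.mp (hspan g hg) (ε / 2) (by positivity)] with i hi
  rw [dist_eq_norm] at hi hfg ⊢
  have hsmall : K * ‖f - g‖ ≤ ε / 4 := by
    calc K * ‖f - g‖ ≤ (|K| + 1) * (ε / (4 * (|K| + 1))) := by
          gcongr
          linarith [le_abs_self K]
      _ = ε / 4 := by field_simp
  have e : Λ i f - Λ' f = Λ i (f - g) + (Λ i g - Λ' g) - Λ' (f - g) := by
    rw [map_sub, map_sub]
    ring
  rw [e]
  linarith [norm_sub_le (Λ i (f - g) + (Λ i g - Λ' g)) (Λ' (f - g)),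
    norm_add_le (Λ i (f - g)) (Λ i g - Λ' g), hK i (f - g), hK' (f - g)]

/-- Expectation of a function of `X_{2t} / 2t`. -/
def empirical (ψ : ℕ → ℤ → Fin 2 → ℂ) (t : ℕ) : C(AddCircle (2 * Real.pi), ℂ) →ₗ[ℂ] ℂ where
  toFun f := ∑ x ∈ Finset.Icc (-((2 * t : ℕ) : ℤ)) (2 * t : ℕ),
    (qwProb ψ (2 * t) x : ℂ) * f (((x / (2 * t) : ℝ)) : AddCircle (2 * Real.pi))
  map_add' f g := by simp [mul_add, Finset.sum_add_distrib]
  map_smul' c f := by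
    simp only [ContinuousMap.smul_apply, smul_eq_mul, RingHom.id_apply, Finset.mul_sum]
    exact Finset.sum_congr rfl fun x _ => by ring

lemma empirical_apply (ψ : ℕ → ℤ → Fin 2 → ℂ) (t : ℕ) (f : C(AddCircle (2 * Real.pi), ℂ)) :
    empirical ψ t f = ∑ x ∈ Finset.Icc (-((2 * t : ℕ) : ℤ)) (2 * t : ℕ),
      (qwProb ψ (2 * t) x : ℂ) * f (((x / (2 * t) : ℝ)) : AddCircle (2 * Real.pi)) := rfl

@[fun_prop]
lemma measurable_velocity (θ₀ θ₁ : ℝ) : Measurable (velocity θ₀ θ₁) := by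
  unfold velocity
  exact Measurable.div (by fun_prop) (continuous_sinEnergy θ₀ θ₁).measurable

@[fun_prop]
lemma measurable_offDiag (θ₀ θ₁ : ℝ) : Measurable (offDiag θ₀ θ₁) := by
  have := (continuous_sinEnergy θ₀ θ₁).measurable
  unfold offDiag
  exact Measurable.div (by fun_prop) (by fun_prop)

@[fun_prop]
lemma measurable_spinMean (θ₀ θ₁ : ℝ) (α β : ℂ) : Measurable (spinMean θ₀ θ₁ α β) := by
  unfold spinMean
  fun_prop

lemma abs_spinMean_le {α β : ℂ} (hαβ : Complex.normSq α + Complex.normSq β = 1) (θ₀ θ₁ k : ℝ) :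
    |spinMean θ₀ θ₁ α β k| ≤ 3 := by
  have hα := Complex.normSq_nonneg α
  have hβ := Complex.normSq_nonneg β
  have h1 : |velocity θ₀ θ₁ k * (Complex.normSq α - Complex.normSq β)| ≤ 1 := by
    rw [abs_mul]
    exact mul_le_one₀ (abs_velocity_le _ _ _) (abs_nonneg _)
      (abs_le.mpr ⟨by linarith, by linarith⟩)
  have hα' : ‖α‖ ≤ 1 := by
    rw [← sq_le_one_iff₀ (norm_nonneg _), ← Complex.normSq_eq_norm_sq]
    linarith
  have hβ' : ‖β‖ ≤ 1 := by
    rw [← sq_le_one_iff₀ (norm_nonneg _), ← Complex.normSq_eq_norm_sq]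
    linarith
  have h2 : |((starRingEnd ℂ) α * β * offDiag θ₀ θ₁ k).re| ≤ 1 := by
    refine (Complex.abs_re_le_norm _).trans ?_
    rw [norm_mul, norm_mul, RCLike.norm_conj]
    exact mul_le_one₀ (mul_le_one₀ hα' (norm_nonneg _) hβ') (norm_nonneg _)
      (norm_offDiag_le _ _ _)
  unfold spinMean
  refine (abs_add_le _ _).trans ?_
  rw [abs_mul 2, abs_two]
  linarith

/-- The density over the momentum `k` of the limit of the expectation of `f (X_{2t} / 2t)`. -/
def limitIntegrand (θ₀ θ₁ : ℝ) (α β : ℂ) (f : ℝ → ℂ) (k : ℝ) : ℂ :=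
  (f (velocity θ₀ θ₁ k) + f (-velocity θ₀ θ₁ k)) / 2 +
    spinMean θ₀ θ₁ α β k * ((f (-velocity θ₀ θ₁ k) - f (velocity θ₀ θ₁ k)) / 2)

lemma norm_limitIntegrand_le {α β : ℂ} (hαβ : Complex.normSq α + Complex.normSq β = 1)
    (θ₀ θ₁ : ℝ) {f : ℝ → ℂ} {M : ℝ} (hf : ∀ x, ‖f x‖ ≤ M) (k : ℝ) :
    ‖limitIntegrand θ₀ θ₁ α β f k‖ ≤ 4 * M := by
  have h1 : ‖(f (velocity θ₀ θ₁ k) + f (-velocity θ₀ θ₁ k)) / 2‖ ≤ M := by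
    rw [norm_div, Complex.norm_ofNat]
    linarith [norm_add_le (f (velocity θ₀ θ₁ k)) (f (-velocity θ₀ θ₁ k)),
      hf (velocity θ₀ θ₁ k), hf (-velocity θ₀ θ₁ k)]
  have h2 : ‖(f (-velocity θ₀ θ₁ k) - f (velocity θ₀ θ₁ k)) / 2‖ ≤ M := by
    rw [norm_div, Complex.norm_ofNat]
    linarith [norm_sub_le (f (-velocity θ₀ θ₁ k)) (f (velocity θ₀ θ₁ k)),
      hf (velocity θ₀ θ₁ k), hf (-velocity θ₀ θ₁ k)]
  have h3 : ‖(spinMean θ₀ θ₁ α β k : ℂ)‖ ≤ 3 := by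
    rw [Complex.norm_real]
    exact abs_spinMean_le hαβ θ₀ θ₁ k
  unfold limitIntegrand
  refine (norm_add_le _ _).trans ?_
  rw [norm_mul]
  have := mul_le_mul h3 h2 (norm_nonneg _) (by norm_num)
  linarith

lemma intervalIntegrable_of_norm_le {E : Type*} [NormedAddCommGroup E] {f : ℝ → E} {M : ℝ}
    (hf : AEStronglyMeasurable f) (hM : ∀ x, ‖f x‖ ≤ M) (a b : ℝ) :
    IntervalIntegrable f volume a b :=
  (intervalIntegrable_const (c := M)).mono_fun hf.restrict
    (Eventually.of_forall fun x => (hM x).trans (le_abs_self M))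

lemma intervalIntegrable_limitIntegrand {α β : ℂ}
    (hαβ : Complex.normSq α + Complex.normSq β = 1) (θ₀ θ₁ : ℝ) {f : ℝ → ℂ} {M : ℝ}
    (hf : ∀ x, ‖f x‖ ≤ M) (hfc : Continuous f) (a b : ℝ) :
    IntervalIntegrable (limitIntegrand θ₀ θ₁ α β f) volume a b := by
  refine intervalIntegrable_of_norm_le ?_ (norm_limitIntegrand_le hαβ θ₀ θ₁ hf) a b
  have := hfc.measurable
  apply Measurable.aestronglyMeasurable
  unfold limitIntegrand
  fun_prop

/-- The limit of the functionals `empirical ψ t`. -/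
def limitFunctional (θ₀ θ₁ : ℝ) {α β : ℂ} (hαβ : Complex.normSq α + Complex.normSq β = 1) :
    C(AddCircle (2 * Real.pi), ℂ) →ₗ[ℂ] ℂ where
  toFun f := (2 * Real.pi : ℂ)⁻¹ * ∫ k in (0 : ℝ)..2 * Real.pi,
    limitIntegrand θ₀ θ₁ α β (fun x => f (x : AddCircle (2 * Real.pi))) k
  map_add' f g := by
    have hi : ∀ f : C(AddCircle (2 * Real.pi), ℂ), IntervalIntegrable
        (limitIntegrand θ₀ θ₁ α β (fun x => f (x : AddCircle (2 * Real.pi)))) volume 0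
          (2 * Real.pi) := fun f =>
      intervalIntegrable_limitIntegrand hαβ θ₀ θ₁ (fun x => f.norm_coe_le_norm _)
        (f.continuous.comp (AddCircle.continuous_mk' _)) _ _
    rw [← mul_add, ← intervalIntegral.integral_add (hi f) (hi g)]
    congr 2
    funext k
    simp only [limitIntegrand, ContinuousMap.add_apply]
    ring
  map_smul' c f := by
    rw [RingHom.id_apply, smul_eq_mul, mul_left_comm]
    congr 1
    rw [← intervalIntegral.integral_const_mul]
    congr 1
    funext k
    simp only [limitIntegrand, ContinuousMap.smul_apply, smul_eq_mul]
    ring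

lemma norm_limitFunctional_le (θ₀ θ₁ : ℝ) {α β : ℂ}
    (hαβ : Complex.normSq α + Complex.normSq β = 1) (f : C(AddCircle (2 * Real.pi), ℂ)) :
    ‖limitFunctional θ₀ θ₁ hαβ f‖ ≤ 4 * ‖f‖ := by
  have h := intervalIntegral.norm_integral_le_of_norm_le_const (a := 0) (b := 2 * Real.pi)
    fun k _ => norm_limitIntegrand_le hαβ θ₀ θ₁
      (f := fun x => f (x : AddCircle (2 * Real.pi))) (fun x => f.norm_coe_le_norm _) k
  have hpi := Real.two_pi_pos
  rw [sub_zero, abs_of_pos hpi] at h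
  change ‖(2 * Real.pi : ℂ)⁻¹ * ∫ k in (0 : ℝ)..2 * Real.pi, limitIntegrand θ₀ θ₁ α β
    (fun x => f (x : AddCircle (2 * Real.pi))) k‖ ≤ _
  have hn : ‖(2 * Real.pi : ℂ)‖ = 2 * Real.pi := by
    rw [norm_mul, Complex.norm_ofNat, Complex.norm_real, Real.norm_of_nonneg Real.pi_pos.le]
  rw [norm_mul, norm_inv, hn, inv_mul_le_iff₀ hpi]
  linarith

lemma continuous_fourierAmp {α β : ℂ} {U : ℕ → Matrix (Fin 2) (Fin 2) ℂ}
    {ψ : ℕ → ℤ → Fin 2 → ℂ} (hinit : QWInit α β ψ) (hevol : QWEvolves U ψ) (t : ℕ) (i : Fin 2) :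
    Continuous (fourierAmp ψ t i) := by
  rw [funext (fourierAmp_eq_sum hinit hevol t i)]
  fun_prop

lemma integral_inner_fourierAmp {α β : ℂ} {U : ℕ → Matrix (Fin 2) (Fin 2) ℂ}
    {ψ : ℕ → ℤ → Fin 2 → ℂ} (hinit : QWInit α β ψ) (hevol : QWEvolves U ψ) (t : ℕ) (h : ℝ) :
    ∫ k in (0 : ℝ)..2 * Real.pi, ((starRingEnd ℂ) (fourierAmp ψ t 0 k) * fourierAmp ψ t 0 (k + h) +
      (starRingEnd ℂ) (fourierAmp ψ t 1 k) * fourierAmp ψ t 1 (k + h)) =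
    2 * Real.pi * ∑ x ∈ Finset.Icc (-(t : ℤ)) t,
      (qwProb ψ t x : ℂ) * Complex.exp (-(Complex.I * h * x)) := by
  have hc := fun i => continuous_fourierAmp hinit hevol t i
  have hi : ∀ i, IntervalIntegrable
      (fun k => (starRingEnd ℂ) (fourierAmp ψ t i k) * fourierAmp ψ t i (k + h)) volume 0
      (2 * Real.pi) := fun i => by
    refine Continuous.intervalIntegrable ?_ _ _
    exact (Complex.continuous_conj.comp (hc i)).mul ((hc i).comp (continuous_add_const h))
  rw [intervalIntegral.integral_add (hi 0) (hi 1)]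
  simp_rw [fourierAmp_eq_sum hinit hevol]
  rw [integral_conj_mul_shift, integral_conj_mul_shift, ← mul_add, ← Finset.sum_add_distrib]
  congr 1
  refine Finset.sum_congr rfl fun x _ => ?_
  unfold qwProb
  push_cast
  ring

lemma sum_qwProb {θ₀ θ₁ : ℝ} {α β : ℂ} {ψ : ℕ → ℤ → Fin 2 → ℂ}
    (hinit : QWInit α β ψ) (hαβ : Complex.normSq α + Complex.normSq β = 1)
    (hevol : QWEvolves (fun t => if Even t then Hcoin θ₀ else Hcoin θ₁) ψ) (t : ℕ) :
    ∑ x ∈ Finset.Icc (-(t : ℤ)) t, qwProb ψ t x = 1 := by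
  have h := integral_inner_fourierAmp hinit hevol t 0
  have hone : ∀ k : ℝ, (starRingEnd ℂ) (fourierAmp ψ t 0 k) * fourierAmp ψ t 0 (k + 0) +
      (starRingEnd ℂ) (fourierAmp ψ t 1 k) * fourierAmp ψ t 1 (k + 0) = 1 := by
    intro k
    rw [add_zero, ← Complex.normSq_eq_conj_mul_self, ← Complex.normSq_eq_conj_mul_self]
    exact_mod_cast normSq_fourierAmp hinit hαβ hevol t k
  have hpi : (2 * Real.pi : ℂ) ≠ 0 := by exact_mod_cast Real.two_pi_pos.ne'
  simp only [hone, intervalIntegral.integral_const, sub_zero, Complex.ofReal_zero, mul_zero,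
    zero_mul, neg_zero, Complex.exp_zero, mul_one] at h
  rw [Complex.real_smul] at h
  push_cast at h
  have h2 := mul_left_cancel₀ hpi h
  exact_mod_cast h2.symm

lemma qwProb_nonneg (ψ : ℕ → ℤ → Fin 2 → ℂ) (t : ℕ) (x : ℤ) : 0 ≤ qwProb ψ t x :=
  add_nonneg (Complex.normSq_nonneg _) (Complex.normSq_nonneg _)

lemma norm_empirical_le {θ₀ θ₁ : ℝ} {α β : ℂ} {ψ : ℕ → ℤ → Fin 2 → ℂ}
    (hinit : QWInit α β ψ) (hαβ : Complex.normSq α + Complex.normSq β = 1)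
    (hevol : QWEvolves (fun t => if Even t then Hcoin θ₀ else Hcoin θ₁) ψ) (t : ℕ)
    (f : C(AddCircle (2 * Real.pi), ℂ)) : ‖empirical ψ t f‖ ≤ 4 * ‖f‖ := by
  have h : ‖empirical ψ t f‖ ≤ ∑ x ∈ Finset.Icc (-((2 * t : ℕ) : ℤ)) (2 * t : ℕ),
      qwProb ψ (2 * t) x * ‖f‖ := by
    rw [empirical_apply]
    refine norm_sum_le_of_le _ fun x _ => ?_
    rw [norm_mul, Complex.norm_real, Real.norm_of_nonneg (qwProb_nonneg _ _ _)]
    exact mul_le_mul_of_nonneg_left (f.norm_coe_le_norm _) (qwProb_nonneg _ _ _)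
  rw [← Finset.sum_mul, sum_qwProb hinit hαβ hevol, one_mul] at h
  linarith [norm_nonneg f]

lemma ae_sin_two_mul_ne_zero : ∀ᵐ k : ℝ, Real.sin (2 * k) ≠ 0 := by
  have hc : (Set.range fun n : ℤ => (n : ℝ) * Real.pi / 2).Countable := Set.countable_range _
  filter_upwards [hc.ae_notMem volume] with k hk hs
  obtain ⟨n, hn⟩ := Real.sin_eq_zero_iff.mp hs
  exact hk ⟨n, by simp only; linarith⟩

lemma fourier_two_pi_apply (n : ℤ) (x : ℝ) : fourier n (x : AddCircle (2 * Real.pi)) =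
    Complex.exp (Complex.I * n * x) := by
  have hpi : (2 * Real.pi : ℂ) ≠ 0 := by exact_mod_cast Real.two_pi_pos.ne'
  rw [fourier_coe_apply]
  congr 1
  push_cast
  field_simp

lemma tendsto_empirical_fourier {θ₀ θ₁ : ℝ} (h₀ : Real.cos θ₀ ≠ 0) (h₁ : Real.cos θ₁ ≠ 0)
    {α β : ℂ} (hαβ : Complex.normSq α + Complex.normSq β = 1) {ψ : ℕ → ℤ → Fin 2 → ℂ}
    (hinit : QWInit α β ψ)
    (hevol : QWEvolves (fun t => if Even t then Hcoin θ₀ else Hcoin θ₁) ψ) (n : ℤ) :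
    Tendsto (fun t => empirical ψ t (fourier n)) atTop
      (nhds (limitFunctional θ₀ θ₁ hαβ (fourier n))) := by
  have hpi : (2 * Real.pi : ℂ) ≠ 0 := by exact_mod_cast Real.two_pi_pos.ne'
  have hfour : ∀ x : ℝ, fourier n (x : AddCircle (2 * Real.pi)) =
      Complex.exp (Complex.I * (n * x : ℝ)) := by
    intro x
    rw [fourier_two_pi_apply, Complex.ofReal_mul, Complex.ofReal_intCast, mul_assoc]
  have hE : ∀ t : ℕ, empirical ψ t (fourier n) = (2 * Real.pi : ℂ)⁻¹ *
      ∫ k in (0 : ℝ)..2 * Real.pi, ((starRingEnd ℂ) (fourierAmp ψ (2 * t) 0 k) *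
          fourierAmp ψ (2 * t) 0 (k + -((n : ℝ) / (2 * t))) +
        (starRingEnd ℂ) (fourierAmp ψ (2 * t) 1 k) *
          fourierAmp ψ (2 * t) 1 (k + -((n : ℝ) / (2 * t)))) := by
    intro t
    rw [empirical_apply, integral_inner_fourierAmp hinit hevol, inv_mul_cancel_left₀ hpi]
    refine Finset.sum_congr rfl fun x _ => ?_
    rw [hfour]
    congr 2
    push_cast
    ring
  have hL : limitFunctional θ₀ θ₁ hαβ (fourier n) = (2 * Real.pi : ℂ)⁻¹ *
      ∫ k in (0 : ℝ)..2 * Real.pi, ((Real.cos (n * velocity θ₀ θ₁ k) : ℂ) -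
        Complex.I * Real.sin (n * velocity θ₀ θ₁ k) * spinMean θ₀ θ₁ α β k) := by
    change (2 * Real.pi : ℂ)⁻¹ * ∫ k in (0 : ℝ)..2 * Real.pi, limitIntegrand θ₀ θ₁ α β
      (fun x => fourier n (x : AddCircle (2 * Real.pi))) k = _
    congr 2
    funext k
    unfold limitIntegrand
    simp only [hfour]
    rw [mul_neg, mul_comm Complex.I, mul_comm Complex.I, Complex.exp_mul_I, Complex.exp_mul_I,
      Complex.ofReal_neg, Complex.cos_neg, Complex.sin_neg, Complex.ofReal_cos, Complex.ofReal_sin]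
    ring
  rw [hL]
  simp_rw [hE]
  refine Tendsto.const_mul _ ?_
  refine intervalIntegral.tendsto_integral_filter_of_dominated_convergence (fun _ => 2) ?_ ?_
    intervalIntegrable_const ?_
  · refine Eventually.of_forall fun t => Continuous.aestronglyMeasurable ?_
    have hc := fun i => continuous_fourierAmp hinit hevol (2 * t) i
    exact ((Complex.continuous_conj.comp (hc 0)).mul ((hc 0).comp (continuous_add_const _))).add
      ((Complex.continuous_conj.comp (hc 1)).mul ((hc 1).comp (continuous_add_const _)))
  · refine Eventually.of_forall fun t => Eventually.of_forall fun k _ => ?_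
    have hb := fun k i => norm_fourierAmp_le hinit hαβ hevol (2 * t) k i
    have hprod : ∀ i, ‖(starRingEnd ℂ) (fourierAmp ψ (2 * t) i k) *
        fourierAmp ψ (2 * t) i (k + -((n : ℝ) / (2 * t)))‖ ≤ 1 := fun i => by
      rw [norm_mul, RCLike.norm_conj]
      exact mul_le_one₀ (hb _ _) (norm_nonneg _) (hb _ _)
    linarith [norm_add_le ((starRingEnd ℂ) (fourierAmp ψ (2 * t) 0 k) *
        fourierAmp ψ (2 * t) 0 (k + -((n : ℝ) / (2 * t))))
      ((starRingEnd ℂ) (fourierAmp ψ (2 * t) 1 k) *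
        fourierAmp ψ (2 * t) 1 (k + -((n : ℝ) / (2 * t)))), hprod 0, hprod 1]
  · filter_upwards [ae_sin_two_mul_ne_zero] with k hk _
    exact tendsto_inner_fourierAmp h₀ h₁ hαβ hinit hevol hk n

/-- Boundary values `z (z - p) / (1 - p z)`, `z = exp (i φ)`, of a Blaschke product. -/
def blaschke (p φ : ℝ) : ℂ :=
  Complex.exp (φ * Complex.I) * (Complex.exp (φ * Complex.I) - p) /
    (1 - p * Complex.exp (φ * Complex.I))

lemma exp_ofReal_mul_I_eq (φ : ℝ) :
    Complex.exp (φ * Complex.I) = Real.cos φ + Real.sin φ * Complex.I := by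
  rw [Complex.exp_mul_I, Complex.ofReal_cos, Complex.ofReal_sin]

lemma normSq_one_sub_mul_exp (p φ : ℝ) :
    Complex.normSq (1 - p * Complex.exp (φ * Complex.I)) = 1 - 2 * p * Real.cos φ + p ^ 2 := by
  have e : 1 - p * Complex.exp (φ * Complex.I) =
      ((1 - p * Real.cos φ : ℝ) : ℂ) + ((-(p * Real.sin φ) : ℝ) : ℂ) * Complex.I := by
    rw [exp_ofReal_mul_I_eq]
    push_cast
    ring
  rw [e, Complex.normSq_add_mul_I]
  linear_combination p ^ 2 * Real.sin_sq_add_cos_sq φ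

lemma blaschke_denom_pos {p φ : ℝ} (hφ : Real.sin φ ≠ 0) :
    0 < 1 - 2 * p * Real.cos φ + p ^ 2 := by
  have h := Real.sin_sq_add_cos_sq φ
  have hs : 0 < Real.sin φ ^ 2 := by positivity
  nlinarith [sq_nonneg (p - Real.cos φ)]

lemma blaschke_eq {p φ : ℝ} (hφ : Real.sin φ ≠ 0) :
    blaschke p φ =
      (((2 * Real.cos φ ^ 2 - 1 - 2 * p * Real.cos φ + p ^ 2) /
        (1 - 2 * p * Real.cos φ + p ^ 2) : ℝ) : ℂ) +
      ((2 * Real.sin φ * (Real.cos φ - p) / (1 - 2 * p * Real.cos φ + p ^ 2) : ℝ) : ℂ) *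
        Complex.I := by
  have hd := blaschke_denom_pos (p := p) hφ
  have hd' : (1 - 2 * p * Real.cos φ + p ^ 2 : ℂ) ≠ 0 := by exact_mod_cast hd.ne'
  have hz : 1 - p * Complex.exp (φ * Complex.I) ≠ 0 := by
    rw [← Complex.normSq_pos, normSq_one_sub_mul_exp]
    exact hd
  have hsc : (Real.sin φ : ℂ) ^ 2 + (Real.cos φ : ℂ) ^ 2 = 1 := by
    exact_mod_cast Real.sin_sq_add_cos_sq φ
  unfold blaschke
  rw [exp_ofReal_mul_I_eq] at hz ⊢
  push_cast only [Complex.ofReal_div, Complex.ofReal_add, Complex.ofReal_sub, Complex.ofReal_mul,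
    Complex.ofReal_pow, Complex.ofReal_one, Complex.ofReal_ofNat]
  generalize (Real.cos φ : ℂ) = c at *
  generalize (Real.sin φ : ℂ) = s at *
  rw [div_mul_eq_mul_div, ← add_div, div_eq_div_iff hz hd']
  have hs : s ^ 2 = 1 - c ^ 2 := by linear_combination hsc
  ring_nf
  simp only [Complex.I_sq, hs]
  ring

lemma blaschke_re {p φ : ℝ} (hφ : Real.sin φ ≠ 0) :
    (blaschke p φ).re = (2 * Real.cos φ ^ 2 - 1 - 2 * p * Real.cos φ + p ^ 2) /
        (1 - 2 * p * Real.cos φ + p ^ 2) := by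
  rw [blaschke_eq hφ]
  simp only [Complex.add_re, Complex.ofReal_re, Complex.re_ofReal_mul, Complex.I_re, mul_zero,
    add_zero]

lemma norm_blaschke {p φ : ℝ} (hφ : Real.sin φ ≠ 0) : ‖blaschke p φ‖ = 1 := by
  have hd := blaschke_denom_pos (p := p) hφ
  rw [← sq_eq_sq₀ (norm_nonneg _) zero_le_one, one_pow, ← Complex.normSq_eq_norm_sq,
    blaschke_eq hφ, Complex.normSq_add_mul_I, div_pow, div_pow, ← add_div,
    div_eq_one_iff_eq (by positivity)]
  have hs : Real.sin φ ^ 2 = 1 - Real.cos φ ^ 2 := by linarith [Real.sin_sq_add_cos_sq φ]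
  ring_nf
  rw [hs]
  ring

lemma ae_sin_ne_zero : ∀ᵐ φ : ℝ, Real.sin φ ≠ 0 := by
  filter_upwards [ae_sin_two_mul_ne_zero] with φ h h'
  rw [Real.sin_two_mul, h'] at h
  simp at h

lemma integral_blaschke_pow {p : ℝ} (hp : p ^ 2 ≤ 1) {n : ℕ} (hn : n ≠ 0) :
    ∫ φ in (0 : ℝ)..2 * Real.pi, blaschke p φ ^ n = 0 := by
  rcases hp.lt_or_eq with hp | hp
  · have hp1 : |p| < 1 := (sq_lt_one_iff_abs_lt_one _).mp hp
    have hdiff : DifferentiableOn ℂ (fun z : ℂ => (z * (z - p) / (1 - p * z)) ^ n)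
        (closure (Metric.ball 0 |1|)) := by
      intro z hz
      rw [abs_one, closure_ball (0 : ℂ) one_ne_zero, mem_closedBall_zero_iff] at hz
      have hz' : 1 - p * z ≠ 0 := by
        intro h
        have h1 : ‖(p : ℂ) * z‖ = 1 := by
          rw [← sub_eq_zero.mp h, norm_one]
        rw [norm_mul, Complex.norm_real, Real.norm_eq_abs] at h1
        nlinarith [norm_nonneg z, abs_nonneg p]
      refine DifferentiableAt.differentiableWithinAt ?_
      exact ((by fun_prop : DifferentiableAt ℂ (fun z : ℂ => z * (z - p)) z).div
        (by fun_prop) hz').pow n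
    have h := hdiff.diffContOnCl.circleAverage
    rw [Real.circleAverage_def, zero_mul, zero_div, zero_pow hn, smul_eq_zero] at h
    rcases h with h | h
    · exact absurd h (inv_ne_zero Real.two_pi_pos.ne')
    · simpa [blaschke, circleMap_zero] using h
  · have hae : ∀ᵐ φ : ℝ, blaschke p φ ^ n =
        (-p : ℂ) ^ n * Complex.exp (Complex.I * (n : ℤ) * φ) := by
      filter_upwards [ae_sin_ne_zero] with φ hφ
      have hz : 1 - p * Complex.exp (φ * Complex.I) ≠ 0 := by
        rw [← Complex.normSq_pos, normSq_one_sub_mul_exp]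
        exact blaschke_denom_pos hφ
      have hpc : (p : ℂ) ^ 2 = 1 := by exact_mod_cast hp
      have e : blaschke p φ = -p * Complex.exp (φ * Complex.I) := by
        rw [blaschke, div_eq_iff hz]
        linear_combination (-(Complex.exp (φ * Complex.I)) ^ 2) * hpc
      rw [e, mul_pow, ← Complex.exp_nat_mul]
      congr 2
      push_cast
      ring
    rw [intervalIntegral.integral_congr_ae (hae.mono fun φ h _ => h),
      intervalIntegral.integral_const_mul, integral_exp_int_mul,
      if_neg (by exact_mod_cast hn), mul_zero]

@[fun_prop]
lemma measurable_blaschke (p : ℝ) : Measurable (blaschke p) := by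
  unfold blaschke
  exact Measurable.div (by fun_prop) (by fun_prop)

/-- The integral over a period of a function on the circle composed with `u`. -/
def pullbackIntegral (u : ℝ → ℝ) (hu : Measurable u) :
    C(AddCircle (2 * Real.pi), ℂ) →ₗ[ℂ] ℂ where
  toFun f := ∫ φ in (0 : ℝ)..2 * Real.pi, f (u φ : AddCircle (2 * Real.pi))
  map_add' f g := by
    have hi : ∀ f : C(AddCircle (2 * Real.pi), ℂ), IntervalIntegrable
        (fun φ => f (u φ : AddCircle (2 * Real.pi))) volume 0 (2 * Real.pi) := fun f =>
      intervalIntegrable_of_norm_le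
        ((f.continuous.comp (AddCircle.continuous_mk' _)).measurable.comp
          hu).aestronglyMeasurable (fun x => f.norm_coe_le_norm _) _ _
    exact intervalIntegral.integral_add (hi f) (hi g)
  map_smul' c f := by
    simp only [ContinuousMap.smul_apply, smul_eq_mul, RingHom.id_apply]
    exact intervalIntegral.integral_const_mul _ _

lemma norm_pullbackIntegral_le (u : ℝ → ℝ) (hu : Measurable u)
    (f : C(AddCircle (2 * Real.pi), ℂ)) :
    ‖pullbackIntegral u hu f‖ ≤ 2 * Real.pi * ‖f‖ := by
  have h := intervalIntegral.norm_integral_le_of_norm_le_const (a := 0) (b := 2 * Real.pi)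
    fun φ _ => f.norm_coe_le_norm (u φ : AddCircle (2 * Real.pi))
  rw [sub_zero, abs_of_pos Real.two_pi_pos] at h
  exact h.trans_eq (mul_comm _ _)

lemma pullbackIntegral_arg_blaschke {p : ℝ} (hp : p ^ 2 ≤ 1)
    (f : C(AddCircle (2 * Real.pi), ℂ)) :
    pullbackIntegral (fun φ => (blaschke p φ).arg) (by fun_prop) f =
      pullbackIntegral (fun φ => φ) measurable_id f := by
  have hpow : ∀ n : ℕ, n ≠ 0 → pullbackIntegral (fun φ => (blaschke p φ).arg) (by fun_prop)
      (fourier n) = 0 := by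
    intro n hn
    rw [← integral_blaschke_pow hp hn]
    refine intervalIntegral.integral_congr_ae (ae_sin_ne_zero.mono fun φ hφ _ => ?_)
    rw [fourier_two_pi_apply]
    conv_rhs => rw [← Complex.norm_mul_exp_arg_mul_I (blaschke p φ), norm_blaschke hφ,
      Complex.ofReal_one, one_mul, ← Complex.exp_nat_mul]
    congr 1
    push_cast
    ring
  have hfour : ∀ n : ℤ, pullbackIntegral (fun φ => (blaschke p φ).arg) (by fun_prop) (fourier n) =
      pullbackIntegral (fun φ => φ) measurable_id (fourier n) := by
    intro n
    have hR : pullbackIntegral (fun φ => φ) measurable_id (fourier n) =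
        if n = 0 then 2 * (Real.pi : ℂ) else 0 := by
      rw [← integral_exp_int_mul]
      exact intervalIntegral.integral_congr fun φ _ => fourier_two_pi_apply n φ
    rw [hR]
    obtain ⟨m, rfl | rfl⟩ := n.eq_nat_or_neg
    · split_ifs with h
      · rw [h]
        simp [pullbackIntegral]
      · exact hpow m (by exact_mod_cast h)
    · split_ifs with h
      · rw [h]
        simp [pullbackIntegral]
      · have hm : m ≠ 0 := by
          rintro rfl
          simp at h
        have := congrArg (starRingEnd ℂ) (hpow m hm)
        rw [map_zero] at this
        rw [← this]
        change _ = (starRingEnd ℂ) (∫ φ in (0 : ℝ)..2 * Real.pi, _)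
        rw [intervalIntegral.integral_of_le Real.two_pi_pos.le, ← integral_conj,
          ← intervalIntegral.integral_of_le Real.two_pi_pos.le]
        refine intervalIntegral.integral_congr fun φ _ => ?_
        exact fourier_neg
  exact tendsto_nhds_unique tendsto_const_nhds
    (tendsto_of_tendsto_fourier (l := (atTop : Filter ℕ))
      (fun _ => pullbackIntegral (fun φ => (blaschke p φ).arg) (by fun_prop)) _
      (fun _ => norm_pullbackIntegral_le _ _) (norm_pullbackIntegral_le _ _)
      (fun n => by rw [hfour n]; exact tendsto_const_nhds) f)

/-- A continuous `2π`-periodic function as a function on the circle. -/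
def circleLift (g : ℝ → ℂ) (hg : Continuous g) (hper : Function.Periodic g (2 * Real.pi)) :
    C(AddCircle (2 * Real.pi), ℂ) where
  toFun := hper.lift
  continuous_toFun := continuous_quot_lift _ hg

lemma integral_comp_blaschke_re {p : ℝ} (hp : p ^ 2 ≤ 1) (h : ℝ → ℝ)
    (hc : Continuous fun φ => h (Real.cos φ)) :
    ∫ φ in (0 : ℝ)..2 * Real.pi, h (blaschke p φ).re =
      ∫ φ in (0 : ℝ)..2 * Real.pi, h (Real.cos φ) := by
  have hper : Function.Periodic (fun φ => (h (Real.cos φ) : ℂ)) (2 * Real.pi) := fun φ => by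
    simp only [Real.cos_add_two_pi]
  have key := pullbackIntegral_arg_blaschke hp
    (circleLift _ (Complex.continuous_ofReal.comp hc) hper)
  change (∫ φ in (0 : ℝ)..2 * Real.pi, (h (Real.cos (blaschke p φ).arg) : ℂ)) =
    ∫ φ in (0 : ℝ)..2 * Real.pi, (h (Real.cos φ) : ℂ) at key
  rw [intervalIntegral.integral_ofReal, intervalIntegral.integral_ofReal,
    Complex.ofReal_inj] at key
  rw [← key]
  refine intervalIntegral.integral_congr_ae (ae_sin_ne_zero.mono fun φ hφ _ => ?_)
  have hB := norm_blaschke (p := p) hφ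
  rw [Complex.cos_arg (by rw [← norm_ne_zero_iff, hB]; exact one_ne_zero), hB, div_one]

/-- The squared group velocity as a function of the cosine of the uniformizing angle. -/
def profile (c y : ℝ) : ℝ := c * (1 - y) / (2 - c - c * y)

lemma velocity_sq {θ₀ θ₁ k : ℝ} (h₀ : Real.cos θ₀ ≠ 0) (h₁ : Real.cos θ₁ ≠ 0)
    (hs₀ : Real.sin θ₀ ≠ 0) (hk : Real.sin (2 * k) ≠ 0) :
    velocity θ₀ θ₁ k ^ 2 = profile (Real.cos θ₀ ^ 2)
      (blaschke (Real.cos θ₀ * Real.sin θ₁ / (Real.cos θ₁ * Real.sin θ₀)) (2 * k)).re := by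
  have hS := sinEnergy_pos h₀ h₁ hk
  have hd := blaschke_denom_pos
    (p := Real.cos θ₀ * Real.sin θ₁ / (Real.cos θ₁ * Real.sin θ₀)) hk
  have hS2 : sinEnergy θ₀ θ₁ k ^ 2 = 1 - cosEnergy θ₀ θ₁ k ^ 2 :=
    Real.sq_sqrt (Real.sqrt_pos.mp hS).le
  have hS2pos : 0 < sinEnergy θ₀ θ₁ k ^ 2 := by positivity
  rw [blaschke_re hk]
  have hp : Real.cos θ₀ * Real.sin θ₁ / (Real.cos θ₁ * Real.sin θ₀) *
      (Real.cos θ₁ * Real.sin θ₀) = Real.cos θ₀ * Real.sin θ₁ :=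
    div_mul_cancel₀ _ (mul_ne_zero h₁ hs₀)
  generalize Real.cos θ₀ * Real.sin θ₁ / (Real.cos θ₁ * Real.sin θ₀) = p at hp hd ⊢
  have e₀ := Real.sin_sq_add_cos_sq θ₀
  have e₁ := Real.sin_sq_add_cos_sq θ₁
  have ek := Real.sin_sq_add_cos_sq (2 * k)
  unfold velocity profile
  rw [cosEnergy] at hS2
  rw [div_pow]
  generalize sinEnergy θ₀ θ₁ k = S at *
  generalize Real.cos θ₀ = a at *
  generalize Real.cos θ₁ = b at *
  generalize Real.sin θ₀ = s at *
  generalize Real.sin θ₁ = s' at *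
  generalize Real.cos (2 * k) = u at *
  generalize Real.sin (2 * k) = w at *
  have hE : b ^ 2 * ((2 - a ^ 2) * (1 - 2 * p * u + p ^ 2) -
      a ^ 2 * (2 * u ^ 2 - 1 - 2 * p * u + p ^ 2)) = 2 * S ^ 2 := by
    apply mul_left_cancel₀ (pow_ne_zero 2 hs₀)
    have h1 : p ^ 2 * b ^ 2 * s ^ 2 = a ^ 2 * s' ^ 2 := by
      linear_combination (p * (b * s) + a * s') * hp
    have h2 : p * b ^ 2 * s ^ 2 = a * s' * b * s := by linear_combination b * s * hp
    rw [hS2]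
    linear_combination (2 - 2 * a ^ 2) * h1 + (-4 * u + 4 * a ^ 2 * u) * h2 +
      (4 * s * b * a * u * s' + 2 * s' ^ 2 * (s ^ 2 - a ^ 2)) * e₀ + 2 * s ^ 2 * e₁
  have hE0 : (2 - a ^ 2) * (1 - 2 * p * u + p ^ 2) -
      a ^ 2 * (2 * u ^ 2 - 1 - 2 * p * u + p ^ 2) ≠ 0 := by
    intro h
    rw [h] at hE
    linarith
  have e : a ^ 2 * (1 - (2 * u ^ 2 - 1 - 2 * p * u + p ^ 2) / (1 - 2 * p * u + p ^ 2)) /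
      (2 - a ^ 2 - a ^ 2 * ((2 * u ^ 2 - 1 - 2 * p * u + p ^ 2) / (1 - 2 * p * u + p ^ 2))) =
      2 * a ^ 2 * w ^ 2 / ((2 - a ^ 2) * (1 - 2 * p * u + p ^ 2) -
      a ^ 2 * (2 * u ^ 2 - 1 - 2 * p * u + p ^ 2)) := by
    rw [← mul_div_mul_right _ (2 - a ^ 2 - _) hd.ne']
    congr 1
    · rw [mul_assoc, sub_mul, div_mul_cancel₀ _ hd.ne', one_mul]
      linear_combination (-2 * a ^ 2) * ek
    · rw [sub_mul, mul_assoc (a ^ 2), div_mul_cancel₀ _ hd.ne']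
  rw [e, div_eq_div_iff hS2pos.ne' hE0]
  linear_combination a ^ 2 * w ^ 2 * hE

lemma velocity_periodic (θ₀ θ₁ : ℝ) : Function.Periodic (velocity θ₀ θ₁) Real.pi := fun k => by
  simp only [velocity, sinEnergy, cosEnergy, mul_add, Real.sin_add_two_pi, Real.cos_add_two_pi]

lemma velocity_swap (θ₀ θ₁ k : ℝ) : velocity θ₁ θ₀ k = velocity θ₀ θ₁ k := by
  simp only [velocity, sinEnergy, cosEnergy, mul_comm]

lemma cos_two_mul_two_pi_sub (k : ℝ) :
    Real.cos (2 * (2 * Real.pi - k)) = Real.cos (2 * k) := by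
  rw [← Real.cos_neg (2 * k), ← Real.cos_add_nat_mul_two_pi (-(2 * k)) 2]
  congr 1
  push_cast
  ring

lemma velocity_two_pi_sub (θ₀ θ₁ k : ℝ) :
    velocity θ₀ θ₁ (2 * Real.pi - k) = -velocity θ₀ θ₁ k := by
  have hs : Real.sin (2 * (2 * Real.pi - k)) = -Real.sin (2 * k) := by
    rw [← Real.sin_neg, ← Real.sin_add_nat_mul_two_pi (-(2 * k)) 2]
    congr 1
    push_cast
    ring
  simp only [velocity, sinEnergy, cosEnergy, hs, cos_two_mul_two_pi_sub]
  ring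

lemma profile_denom_pos {c y : ℝ} (hc : 0 ≤ c) (hc1 : c < 1) (hy : y ≤ 1) :
    0 < 2 - c - c * y := by
  nlinarith

lemma continuous_profile_cos {c : ℝ} (hc : 0 ≤ c) (hc1 : c < 1) :
    Continuous fun φ => profile c (Real.cos φ) := by
  unfold profile
  exact Continuous.div (by fun_prop) (by fun_prop)
    fun φ => (profile_denom_pos hc hc1 (Real.cos_le_one φ)).ne'

lemma intervalIntegrable_velocity_pow (θ₀ θ₁ : ℝ) (n : ℕ) (a b : ℝ) :
    IntervalIntegrable (fun k => velocity θ₀ θ₁ k ^ n) volume a b := by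
  refine intervalIntegrable_of_norm_le (M := 1) ?_ (fun k => ?_) a b
  · exact ((measurable_velocity θ₀ θ₁).pow_const n).aestronglyMeasurable
  · rw [norm_pow, Real.norm_eq_abs]
    exact pow_le_one₀ (abs_nonneg _) (abs_velocity_le _ _ _)

lemma integral_velocity_pow_of_le {θ₀ θ₁ : ℝ} (h₀ : Real.cos θ₀ ≠ 0) (h₁ : Real.cos θ₁ ≠ 0)
    (hs₀ : Real.sin θ₀ ≠ 0) (hle : Real.cos θ₀ ^ 2 ≤ Real.cos θ₁ ^ 2) (n : ℕ) :
    ∫ k in (0 : ℝ)..2 * Real.pi, velocity θ₀ θ₁ k ^ (2 * n) =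
      ∫ φ in (0 : ℝ)..2 * Real.pi, profile (Real.cos θ₀ ^ 2) (Real.cos φ) ^ n := by
  have e₀ := Real.sin_sq_add_cos_sq θ₀
  have e₁ := Real.sin_sq_add_cos_sq θ₁
  have hs₀' : 0 < Real.sin θ₀ ^ 2 := by positivity
  have h₁' : 0 < Real.cos θ₁ ^ 2 := by positivity
  have hp : (Real.cos θ₀ * Real.sin θ₁ / (Real.cos θ₁ * Real.sin θ₀)) ^ 2 ≤ 1 := by
    rw [div_pow, mul_pow, mul_pow, div_le_one (by positivity)]
    nlinarith
  set W : ℝ → ℝ := fun φ => velocity θ₀ θ₁ (φ / 2) ^ (2 * n) with hW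
  have hper : Function.Periodic W (2 * Real.pi) := fun φ => by
    simp only [hW, add_div, mul_div_cancel_left₀ Real.pi two_ne_zero]
    rw [velocity_periodic θ₀ θ₁ (φ / 2)]
  have hWi : ∀ a b, IntervalIntegrable W volume a b := by
    refine intervalIntegrable_of_norm_le (M := 1) ?_ (fun k => ?_)
    · exact (((measurable_velocity θ₀ θ₁).comp (by fun_prop)).pow_const _).aestronglyMeasurable
    · rw [norm_pow, Real.norm_eq_abs]
      exact pow_le_one₀ (abs_nonneg _) (abs_velocity_le _ _ _)
  have hscale : ∫ k in (0 : ℝ)..2 * Real.pi, velocity θ₀ θ₁ k ^ (2 * n) =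
      ∫ φ in (0 : ℝ)..2 * Real.pi, W φ := by
    have h := intervalIntegral.integral_comp_mul_left W two_ne_zero (a := 0) (b := 2 * Real.pi)
    have hsplit := intervalIntegral.integral_add_adjacent_intervals (hWi 0 (2 * Real.pi))
      (hWi (2 * Real.pi) (2 * (2 * Real.pi)))
    have hshift := hper.intervalIntegral_add_eq (2 * Real.pi) 0
    rw [zero_add, ← two_mul] at hshift
    simp only [hW, mul_div_cancel_left₀ _ (two_ne_zero (α := ℝ))] at h
    rw [h, mul_zero, ← hsplit, hshift, smul_eq_mul]
    ring
  rw [hscale, ← integral_comp_blaschke_re hp (fun y => profile (Real.cos θ₀ ^ 2) y ^ n)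
    ((continuous_profile_cos (sq_nonneg _) (by linarith)).pow n)]
  refine intervalIntegral.integral_congr_ae (ae_sin_ne_zero.mono fun φ hφ _ => ?_)
  have hφ2 : 2 * (φ / 2) = φ := by ring
  have h := velocity_sq (k := φ / 2) h₀ h₁ hs₀ (by rwa [hφ2])
  simp only [hW, pow_mul, h, hφ2]

lemma integral_velocity_pow {θ₀ θ₁ : ℝ} (h₀ : Real.cos θ₀ ≠ 0) (h₁ : Real.cos θ₁ ≠ 0)
    (hs₀ : Real.sin θ₀ ≠ 0) (hs₁ : Real.sin θ₁ ≠ 0) (n : ℕ) :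
    ∫ k in (0 : ℝ)..2 * Real.pi, velocity θ₀ θ₁ k ^ (2 * n) =
      ∫ φ in (0 : ℝ)..2 * Real.pi,
        profile (min |Real.cos θ₀| |Real.cos θ₁| ^ 2) (Real.cos φ) ^ n := by
  rcases le_total |Real.cos θ₀| |Real.cos θ₁| with h | h
  · rw [min_eq_left h, sq_abs, integral_velocity_pow_of_le h₀ h₁ hs₀ (sq_le_sq.mpr h)]
  · rw [min_eq_right h, sq_abs, ← integral_velocity_pow_of_le h₁ h₀ hs₁ (sq_le_sq.mpr h)]
    simp only [velocity_swap]

/-- Change of variables that turns the Konno density into the uniform density. -/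
def konnoMap (m τ : ℝ) : ℝ := m * Real.sin τ / Real.sqrt (1 - m ^ 2 * Real.cos τ ^ 2)

lemma konnoMap_denom_pos {m : ℝ} (hm1 : m ^ 2 < 1) (τ : ℝ) :
    0 < 1 - m ^ 2 * Real.cos τ ^ 2 := by
  nlinarith [Real.cos_sq_le_one τ, sq_nonneg m, sq_nonneg (Real.cos τ)]

lemma konnoMap_sq {m : ℝ} (hm1 : m ^ 2 < 1) (τ : ℝ) :
    konnoMap m τ ^ 2 = profile (m ^ 2) (Real.cos (2 * τ)) := by
  have hD := konnoMap_denom_pos hm1 τ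
  have hE := profile_denom_pos (sq_nonneg m) hm1 (Real.cos_le_one (2 * τ))
  rw [konnoMap, profile, div_pow, Real.sq_sqrt hD.le, div_eq_div_iff hD.ne' hE.ne',
    Real.cos_two_mul, mul_pow, Real.sin_sq]
  ring

lemma konnoMap_neg (m τ : ℝ) : konnoMap m (-τ) = -konnoMap m τ := by
  simp only [konnoMap, Real.sin_neg, Real.cos_neg]
  ring

lemma hasDerivAt_konnoMap {m : ℝ} (hm1 : m ^ 2 < 1) (τ : ℝ) :
    HasDerivAt (konnoMap m)
      (m * Real.cos τ * (1 - m ^ 2) / Real.sqrt (1 - m ^ 2 * Real.cos τ ^ 2) ^ 3) τ := by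
  have hD := konnoMap_denom_pos hm1 τ
  have hq := Real.sqrt_pos.mpr hD
  have h1 : HasDerivAt (fun τ => 1 - m ^ 2 * Real.cos τ ^ 2)
      (2 * m ^ 2 * Real.cos τ * Real.sin τ) τ := by
    refine ((((Real.hasDerivAt_cos τ).pow 2).const_mul (m ^ 2)).const_sub 1).congr_deriv ?_
    push_cast
    ring
  refine (((Real.hasDerivAt_sin τ).const_mul m).div (h1.sqrt hD.ne') hq.ne').congr_deriv ?_
  have hsq : Real.sqrt (1 - m ^ 2 * Real.cos τ ^ 2) ^ 2 = 1 - m ^ 2 * Real.cos τ ^ 2 :=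
    Real.sq_sqrt hD.le
  have e := Real.sin_sq_add_cos_sq τ
  generalize Real.sqrt (1 - m ^ 2 * Real.cos τ ^ 2) = R at *
  field_simp
  linear_combination m * Real.cos τ * (hsq - m ^ 2 * e)

lemma konnoMap_deriv_pos {m τ : ℝ} (hm : 0 < m) (hm1 : m ^ 2 < 1)
    (hτ : τ ∈ Set.Ioo (-(Real.pi / 2)) (Real.pi / 2)) :
    0 < m * Real.cos τ * (1 - m ^ 2) / Real.sqrt (1 - m ^ 2 * Real.cos τ ^ 2) ^ 3 := by
  have hq := Real.sqrt_pos.mpr (konnoMap_denom_pos hm1 τ)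
  have hc := Real.cos_pos_of_mem_Ioo hτ
  have : 0 < 1 - m ^ 2 := by linarith
  positivity

lemma continuous_konnoMap {m : ℝ} (hm1 : m ^ 2 < 1) : Continuous (konnoMap m) :=
  continuous_iff_continuousAt.mpr fun τ => (hasDerivAt_konnoMap hm1 τ).continuousAt

lemma strictMonoOn_konnoMap {m : ℝ} (hm : 0 < m) (hm1 : m ^ 2 < 1) :
    StrictMonoOn (konnoMap m) (Set.Icc (-(Real.pi / 2)) (Real.pi / 2)) := by
  refine strictMonoOn_of_deriv_pos (convex_Icc _ _) (continuous_konnoMap hm1).continuousOn ?_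
  intro τ hτ
  rw [interior_Icc] at hτ
  rw [(hasDerivAt_konnoMap hm1 τ).deriv]
  exact konnoMap_deriv_pos hm hm1 hτ

lemma konnoMap_image {m : ℝ} (hm : 0 < m) (hm1 : m ^ 2 < 1) :
    konnoMap m '' Set.Ioo (-(Real.pi / 2)) (Real.pi / 2) = Set.Ioo (-m) m := by
  have hpi := Real.pi_pos
  have hle : -(Real.pi / 2) ≤ Real.pi / 2 := by linarith
  have hR : konnoMap m (Real.pi / 2) = m := by simp [konnoMap]
  have hL : konnoMap m (-(Real.pi / 2)) = -m := by rw [konnoMap_neg, hR]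
  have hmono := strictMonoOn_konnoMap hm hm1
  apply Set.Subset.antisymm
  · rintro _ ⟨τ, hτ, rfl⟩
    have h1 := hmono (Set.left_mem_Icc.mpr hle) (Set.Ioo_subset_Icc_self hτ) hτ.1
    have h2 := hmono (Set.Ioo_subset_Icc_self hτ) (Set.right_mem_Icc.mpr hle) hτ.2
    rw [hL] at h1
    rw [hR] at h2
    exact ⟨h1, h2⟩
  · have h := intermediate_value_Ioo hle (continuous_konnoMap hm1).continuousOn
    rwa [hL, hR] at h

lemma deriv_mul_konnoDensity {m τ : ℝ} (hm : 0 < m) (hm1 : m ^ 2 < 1)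
    (hτ : τ ∈ Set.Ioo (-(Real.pi / 2)) (Real.pi / 2)) :
    m * Real.cos τ * (1 - m ^ 2) / Real.sqrt (1 - m ^ 2 * Real.cos τ ^ 2) ^ 3 *
      konnoDensity m (konnoMap m τ) = Real.pi⁻¹ := by
  have hmem : konnoMap m τ ∈ Set.Ioo (-m) m := konnoMap_image hm hm1 ▸ Set.mem_image_of_mem _ hτ
  have hD := konnoMap_denom_pos hm1 τ
  have hq := Real.sqrt_pos.mpr hD
  have hc := Real.cos_pos_of_mem_Ioo hτ
  have hm1' : 0 < 1 - m ^ 2 := by linarith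
  have hr := Real.sqrt_pos.mpr hm1'
  have hsq : Real.sqrt (1 - m ^ 2 * Real.cos τ ^ 2) ^ 2 = 1 - m ^ 2 * Real.cos τ ^ 2 :=
    Real.sq_sqrt hD.le
  have hrsq : Real.sqrt (1 - m ^ 2) ^ 2 = 1 - m ^ 2 := Real.sq_sqrt hm1'.le
  have e := Real.sin_sq_add_cos_sq τ
  rw [konnoDensity, abs_of_pos hm, if_pos (abs_lt.mpr hmem)]
  have h1 : 1 - konnoMap m τ ^ 2 =
      (1 - m ^ 2) / Real.sqrt (1 - m ^ 2 * Real.cos τ ^ 2) ^ 2 := by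
    rw [konnoMap, div_pow, eq_div_iff (by positivity), sub_mul, div_mul_cancel₀ _ (by positivity),
      hsq]
    linear_combination (-m ^ 2) * e
  have h2 : Real.sqrt (m ^ 2 - konnoMap m τ ^ 2) = m * Real.sqrt (1 - m ^ 2) * Real.cos τ /
      Real.sqrt (1 - m ^ 2 * Real.cos τ ^ 2) := by
    rw [Real.sqrt_eq_iff_mul_self_eq_of_pos (by positivity), ← sq, konnoMap, div_pow, div_pow,
      eq_sub_iff_add_eq, ← add_div, div_eq_iff (by positivity), hsq, mul_pow, mul_pow, mul_pow,
      hrsq]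
    linear_combination m ^ 2 * e
  rw [h1, h2]
  generalize Real.sqrt (1 - m ^ 2 * Real.cos τ ^ 2) = R at *
  generalize Real.sqrt (1 - m ^ 2) = T at *
  field_simp

lemma integral_mul_konnoDensity {m : ℝ} (hm : 0 < m) (hm1 : m ^ 2 < 1) (G : ℝ → ℝ) :
    ∫ x in (-m)..m, G x * konnoDensity m x =
      Real.pi⁻¹ * ∫ τ in (-(Real.pi / 2))..Real.pi / 2, G (konnoMap m τ) := by
  have hpi := Real.pi_pos
  rw [intervalIntegral.integral_of_le (by linarith), intervalIntegral.integral_of_le (by linarith),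
    integral_Ioc_eq_integral_Ioo, integral_Ioc_eq_integral_Ioo, ← konnoMap_image hm hm1,
    integral_image_eq_integral_abs_deriv_smul measurableSet_Ioo
      (fun τ _ => (hasDerivAt_konnoMap hm1 τ).hasDerivWithinAt)
      ((strictMonoOn_konnoMap hm hm1).injOn.mono Set.Ioo_subset_Icc_self),
    ← integral_const_mul]
  refine setIntegral_congr_fun measurableSet_Ioo fun τ hτ => ?_
  have h := deriv_mul_konnoDensity hm hm1 hτ
  simp only [smul_eq_mul, abs_of_pos (konnoMap_deriv_pos hm hm1 hτ)]
  rw [← h]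
  ring

lemma integral_konnoMap_pow_even {m : ℝ} (hm1 : m ^ 2 < 1) (n : ℕ) :
    ∫ τ in (-(Real.pi / 2))..Real.pi / 2, konnoMap m τ ^ (2 * n) =
      2⁻¹ * ∫ φ in (0 : ℝ)..2 * Real.pi, profile (m ^ 2) (Real.cos φ) ^ n := by
  have hper : Function.Periodic (fun φ => profile (m ^ 2) (Real.cos φ) ^ n) (2 * Real.pi) :=
    fun φ => by simp only [Real.cos_add_two_pi]
  have hshift := hper.intervalIntegral_add_eq (-Real.pi) 0
  rw [zero_add, show -Real.pi + 2 * Real.pi = Real.pi by ring] at hshift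
  have h := intervalIntegral.integral_comp_mul_left
    (fun φ => profile (m ^ 2) (Real.cos φ) ^ n) two_ne_zero
    (a := -(Real.pi / 2)) (b := Real.pi / 2)
  rw [mul_neg, mul_div_cancel₀ _ two_ne_zero, hshift, smul_eq_mul] at h
  rw [← h]
  simp only [pow_mul, konnoMap_sq hm1]

lemma integral_konnoMap_pow_odd (m : ℝ) {n : ℕ} (hn : Odd n) :
    ∫ τ in (-(Real.pi / 2))..Real.pi / 2, konnoMap m τ ^ n = 0 := by
  have h := intervalIntegral.integral_comp_neg (a := -(Real.pi / 2)) (b := Real.pi / 2)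
    (fun τ => konnoMap m τ ^ n)
  simp only [konnoMap_neg, hn.neg_pow, neg_neg, intervalIntegral.integral_neg] at h
  linarith

lemma offDiag_eq (θ₀ θ₁ k : ℝ) : offDiag θ₀ θ₁ k =
    ((Real.cos θ₁ * Real.sin θ₀ * Real.sin (2 * k) / sinEnergy θ₀ θ₁ k : ℝ) : ℂ) +
    ((-((Real.cos θ₁ * Real.sin θ₀ * Real.cos (2 * k) - Real.sin θ₁ * Real.cos θ₀) /
      sinEnergy θ₀ θ₁ k) : ℝ) : ℂ) * Complex.I := by
  have he : Complex.exp (2 * k * Complex.I) =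
      Real.cos (2 * k) + Real.sin (2 * k) * Complex.I := by
    have := exp_ofReal_mul_I_eq (2 * k)
    push_cast at this ⊢
    exact this
  rw [offDiag, he]
  rcases eq_or_ne (sinEnergy θ₀ θ₁ k) 0 with h | h
  · simp [h]
  · have h' : (sinEnergy θ₀ θ₁ k : ℂ) ≠ 0 := by exact_mod_cast h
    rw [div_eq_iff (mul_ne_zero Complex.I_ne_zero h')]
    push_cast only [Complex.ofReal_div, Complex.ofReal_add, Complex.ofReal_sub,
      Complex.ofReal_mul, Complex.ofReal_neg]
    field_simp
    ring_nf
    simp only [Complex.I_sq]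
    ring

/-- The part of `spinMean` that is symmetric under reflection of the wave number. -/
def spinEven (θ₀ θ₁ : ℝ) (α β : ℂ) (k : ℝ) : ℝ :=
  2 * ((starRingEnd ℂ) α * β).im *
    ((Real.cos θ₁ * Real.sin θ₀ * Real.cos (2 * k) - Real.sin θ₁ * Real.cos θ₀) /
      sinEnergy θ₀ θ₁ k)

lemma spinMean_eq {θ₀ : ℝ} (h₀ : Real.cos θ₀ ≠ 0) (θ₁ : ℝ) (α β : ℂ) (k : ℝ) :
    spinMean θ₀ θ₁ α β k = (Complex.normSq α - Complex.normSq β +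
      (α * (starRingEnd ℂ) β + (starRingEnd ℂ) α * β).re * (Real.sin θ₀ / Real.cos θ₀)) *
        velocity θ₀ θ₁ k + spinEven θ₀ θ₁ α β k := by
  have hre : (α * (starRingEnd ℂ) β + (starRingEnd ℂ) α * β).re =
      2 * ((starRingEnd ℂ) α * β).re := by
    simp only [Complex.add_re, Complex.mul_re, Complex.conj_re, Complex.conj_im]
    ring
  have hoff : ((starRingEnd ℂ) α * β * offDiag θ₀ θ₁ k).re =
      ((starRingEnd ℂ) α * β).re *
        (Real.cos θ₁ * Real.sin θ₀ * Real.sin (2 * k) / sinEnergy θ₀ θ₁ k) +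
      ((starRingEnd ℂ) α * β).im *
        ((Real.cos θ₁ * Real.sin θ₀ * Real.cos (2 * k) - Real.sin θ₁ * Real.cos θ₀) /
          sinEnergy θ₀ θ₁ k) := by
    rw [offDiag_eq]
    generalize (starRingEnd ℂ) α * β = z
    rw [Complex.mul_re]
    simp only [Complex.add_re, Complex.add_im, Complex.ofReal_re, Complex.ofReal_im,
      Complex.re_ofReal_mul, Complex.im_ofReal_mul, Complex.I_re, Complex.I_im]
    ring
  rw [spinMean, hre, hoff, spinEven, velocity]
  field_simp
  ring

lemma spinEven_two_pi_sub (θ₀ θ₁ : ℝ) (α β : ℂ) (k : ℝ) :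
    spinEven θ₀ θ₁ α β (2 * Real.pi - k) = spinEven θ₀ θ₁ α β k := by
  simp only [spinEven, sinEnergy, cosEnergy, cos_two_mul_two_pi_sub]

lemma integral_spinEven_mul_velocity_pow (θ₀ θ₁ : ℝ) (α β : ℂ) {n : ℕ} (hn : Odd n) :
    ∫ k in (0 : ℝ)..2 * Real.pi, spinEven θ₀ θ₁ α β k * velocity θ₀ θ₁ k ^ n = 0 := by
  have h := intervalIntegral.integral_comp_sub_left (a := 0) (b := 2 * Real.pi)
    (fun k => spinEven θ₀ θ₁ α β k * velocity θ₀ θ₁ k ^ n) (2 * Real.pi)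
  simp only [spinEven_two_pi_sub, velocity_two_pi_sub, hn.neg_pow, mul_neg,
    intervalIntegral.integral_neg, sub_self, sub_zero] at h
  linarith

/-- The limit of the `r`-th moment, before the change of variables to the Konno density. -/
def limitMoment (θ₀ θ₁ : ℝ) (α β : ℂ) (r : ℕ) : ℝ :=
  (2 * Real.pi)⁻¹ * ∫ k in (0 : ℝ)..2 * Real.pi,
    ((velocity θ₀ θ₁ k ^ r + (-velocity θ₀ θ₁ k) ^ r) / 2 +
      spinMean θ₀ θ₁ α β k * (((-velocity θ₀ θ₁ k) ^ r - velocity θ₀ θ₁ k ^ r) / 2))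

lemma intervalIntegrable_spinMean_mul_velocity_pow {α β : ℂ}
    (hαβ : Complex.normSq α + Complex.normSq β = 1) (θ₀ θ₁ : ℝ) (n : ℕ) (a b : ℝ) :
    IntervalIntegrable (fun k => spinMean θ₀ θ₁ α β k * velocity θ₀ θ₁ k ^ n) volume a b := by
  obtain ⟨M, hM⟩ : ∃ M : ℝ, ∀ k, |spinMean θ₀ θ₁ α β k| ≤ M := ⟨_, abs_spinMean_le hαβ θ₀ θ₁⟩
  refine intervalIntegrable_of_norm_le (M := M) ?_ (fun k => ?_) a b
  · exact ((measurable_spinMean θ₀ θ₁ α β).mul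
      ((measurable_velocity θ₀ θ₁).pow_const n)).aestronglyMeasurable
  · rw [norm_mul, norm_pow, Real.norm_eq_abs, Real.norm_eq_abs]
    exact (mul_le_of_le_one_right (abs_nonneg _)
      (pow_le_one₀ (abs_nonneg _) (abs_velocity_le _ _ _))).trans (hM k)

lemma limitMoment_eq {θ₀ θ₁ : ℝ} (h₀ : Real.cos θ₀ ≠ 0) (h₁ : Real.cos θ₁ ≠ 0)
    (hs₀ : Real.sin θ₀ ≠ 0) (hs₁ : Real.sin θ₁ ≠ 0) {α β : ℂ}
    (hαβ : Complex.normSq α + Complex.normSq β = 1) (r : ℕ) :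
    limitMoment θ₀ θ₁ α β r =
      ∫ x in (-(min |Real.cos θ₀| |Real.cos θ₁|))..(min |Real.cos θ₀| |Real.cos θ₁|),
        x ^ r * (konnoDensity (min |Real.cos θ₀| |Real.cos θ₁|) x *
          (1 - (Complex.normSq α - Complex.normSq β +
            (α * (starRingEnd ℂ) β + (starRingEnd ℂ) α * β).re *
              (Real.sin θ₀ / Real.cos θ₀)) * x)) := by
  have hvel := integral_velocity_pow h₀ h₁ hs₀ hs₁
  have hspin := spinMean_eq h₀ θ₁ α β
  set m := min |Real.cos θ₀| |Real.cos θ₁|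
  set A := Complex.normSq α - Complex.normSq β +
    (α * (starRingEnd ℂ) β + (starRingEnd ℂ) α * β).re * (Real.sin θ₀ / Real.cos θ₀)
  have hm : 0 < m := lt_min (abs_pos.mpr h₀) (abs_pos.mpr h₁)
  have hm1 : m ^ 2 < 1 := by
    have hle : m ^ 2 ≤ Real.cos θ₀ ^ 2 := by
      rw [← sq_abs (Real.cos θ₀)]
      exact pow_le_pow_left₀ hm.le (min_le_left _ _) 2
    have hs : 0 < Real.sin θ₀ ^ 2 := by positivity
    linarith [Real.sin_sq_add_cos_sq θ₀]
  have hqi : ∀ n : ℕ, IntervalIntegrable (fun τ => konnoMap m τ ^ n) volume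
      (-(Real.pi / 2)) (Real.pi / 2) := fun n =>
    ((continuous_konnoMap hm1).pow n).intervalIntegrable _ _
  have hright : ∫ x in (-m)..m, x ^ r * (konnoDensity m x * (1 - A * x)) =
      Real.pi⁻¹ * ((∫ τ in (-(Real.pi / 2))..Real.pi / 2, konnoMap m τ ^ r) -
        A * ∫ τ in (-(Real.pi / 2))..Real.pi / 2, konnoMap m τ ^ (r + 1)) := by
    rw [← intervalIntegral.integral_const_mul, ← intervalIntegral.integral_sub (hqi r)
      ((hqi (r + 1)).const_mul A)]
    have h := integral_mul_konnoDensity hm hm1 fun x => x ^ r - A * x ^ (r + 1)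
    rw [← h]
    congr 1 with x
    ring
  rw [hright, limitMoment]
  rcases r.even_or_odd' with ⟨n, rfl | rfl⟩
  · simp only [(even_two_mul n).neg_pow, add_self_div_two, sub_self, zero_div, mul_zero, add_zero]
    rw [hvel, integral_konnoMap_pow_odd m (odd_two_mul_add_one n), integral_konnoMap_pow_even hm1,
      mul_inv]
    ring
  · have hodd : Odd (2 * n + 1) := odd_two_mul_add_one n
    have hdiff : ∫ k in (0 : ℝ)..2 * Real.pi, spinEven θ₀ θ₁ α β k *
        velocity θ₀ θ₁ k ^ (2 * n + 1) =
        (∫ k in (0 : ℝ)..2 * Real.pi, spinMean θ₀ θ₁ α β k * velocity θ₀ θ₁ k ^ (2 * n + 1)) -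
        A * ∫ k in (0 : ℝ)..2 * Real.pi, velocity θ₀ θ₁ k ^ (2 * (n + 1)) := by
      rw [← intervalIntegral.integral_const_mul, ← intervalIntegral.integral_sub
        (intervalIntegrable_spinMean_mul_velocity_pow hαβ θ₀ θ₁ _ _ _)
        ((intervalIntegrable_velocity_pow θ₀ θ₁ _ _ _).const_mul A)]
      congr 1 with k
      rw [hspin]
      ring
    rw [integral_spinEven_mul_velocity_pow θ₀ θ₁ α β hodd] at hdiff
    have hneg : ∀ k, (velocity θ₀ θ₁ k ^ (2 * n + 1) + (-velocity θ₀ θ₁ k) ^ (2 * n + 1)) / 2 +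
        spinMean θ₀ θ₁ α β k *
          (((-velocity θ₀ θ₁ k) ^ (2 * n + 1) - velocity θ₀ θ₁ k ^ (2 * n + 1)) / 2) =
        -(spinMean θ₀ θ₁ α β k * velocity θ₀ θ₁ k ^ (2 * n + 1)) := by
      intro k
      rw [hodd.neg_pow]
      ring
    simp only [hneg]
    rw [intervalIntegral.integral_neg, sub_eq_zero.mp hdiff.symm, hvel,
      integral_konnoMap_pow_odd m hodd,
      show 2 * n + 1 + 1 = 2 * (n + 1) by ring, integral_konnoMap_pow_even hm1, mul_inv]
    ring

/-- A continuous function on the circle that agrees with `x ^ r` for `|x| ≤ 1`. -/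
def circleMonomial (r : ℕ) : C(AddCircle (2 * Real.pi), ℂ) :=
  circleLift (fun x : ℝ => ((Real.arcsin (Real.sin x) ^ r : ℝ) : ℂ)) (by fun_prop)
    (by intro x; simp only [Real.sin_add_two_pi])

lemma circleMonomial_apply (r : ℕ) {x : ℝ} (hx : |x| ≤ 1) :
    circleMonomial r (x : AddCircle (2 * Real.pi)) = ((x ^ r : ℝ) : ℂ) := by
  have h := abs_le.mp hx
  have hpi := Real.pi_gt_three
  change ((Real.arcsin (Real.sin x) ^ r : ℝ) : ℂ) = _
  rw [Real.arcsin_sin (by linarith) (by linarith)]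

lemma limitFunctional_circleMonomial (θ₀ θ₁ : ℝ) {α β : ℂ}
    (hαβ : Complex.normSq α + Complex.normSq β = 1) (r : ℕ) :
    limitFunctional θ₀ θ₁ hαβ (circleMonomial r) = (limitMoment θ₀ θ₁ α β r : ℂ) := by
  change (2 * Real.pi : ℂ)⁻¹ * ∫ k in (0 : ℝ)..2 * Real.pi, limitIntegrand θ₀ θ₁ α β
    (fun x => circleMonomial r (x : AddCircle (2 * Real.pi))) k = _
  rw [limitMoment, Complex.ofReal_mul, ← intervalIntegral.integral_ofReal]
  push_cast only [Complex.ofReal_inv, Complex.ofReal_mul, Complex.ofReal_ofNat]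
  congr 2 with k
  have h := abs_velocity_le θ₀ θ₁ k
  rw [limitIntegrand, circleMonomial_apply r h, circleMonomial_apply r (by rwa [abs_neg])]
  push_cast
  ring

lemma tsum_eq_empirical_re {α β : ℂ} {U : ℕ → Matrix (Fin 2) (Fin 2) ℂ}
    {ψ : ℕ → ℤ → Fin 2 → ℂ} (hinit : QWInit α β ψ) (hevol : QWEvolves U ψ) (r t : ℕ) :
    ∑' x : ℤ, ((x : ℝ) / (2 * (t : ℝ))) ^ r * qwProb ψ (2 * t) x =
      (empirical ψ t (circleMonomial r)).re := by
  rw [tsum_eq_sum (s := Finset.Icc (-((2 * t : ℕ) : ℤ)) (2 * t : ℕ)), empirical_apply,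
    Complex.re_sum]
  · refine Finset.sum_congr rfl fun x hx => ?_
    rw [Finset.mem_Icc] at hx
    have hx' : |(x : ℝ)| ≤ 2 * t := by
      rw [abs_le]
      constructor
      · exact_mod_cast hx.1
      · exact_mod_cast hx.2
    have hle : |(x : ℝ) / (2 * t)| ≤ 1 := by
      rw [abs_div, abs_of_nonneg (by positivity : (0 : ℝ) ≤ 2 * t)]
      exact div_le_one_of_le₀ hx' (by positivity)
    rw [circleMonomial_apply r hle, ← Complex.ofReal_mul, Complex.ofReal_re, mul_comm]
  · intro x hx
    have h := amp_eq_zero_of_notMem hinit hevol (2 * t) x hx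
    simp [qwProb, h]

lemma cos_ne_zero_of_ne {θ : ℝ} (hθ : ∀ n : ℤ, θ ≠ (n : ℝ) * Real.pi / 2) :
    Real.cos θ ≠ 0 := by
  rw [Real.cos_ne_zero_iff]
  intro n h
  apply hθ (2 * n + 1)
  rw [h]
  push_cast
  ring

lemma sin_ne_zero_of_ne {θ : ℝ} (hθ : ∀ n : ℤ, θ ≠ (n : ℝ) * Real.pi / 2) :
    Real.sin θ ≠ 0 := by
  rw [Real.sin_ne_zero_iff]
  intro n h
  apply hθ (2 * n)
  rw [← h]
  push_cast
  ring

end TwoPeriodQW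

/-- For the two-period QW with coins `H₀ = H(θ₀)` (even steps), `H₁ = H(θ₁)` (odd steps),
`θ_γ ≠ nπ/2`, `θ₀ ≠ θ₁`, every moment of `X_{2t}/(2t)` converges:
`lim_t E((X_{2t}/2t)^r) = ∫_{-|c_ξ|}^{|c_ξ|} x^r f(x) dx` with
`|c_ξ| = min{|cos θ₀|, |cos θ₁|}`. -/
theorem two_period_QW_moments (θ₀ θ₁ : ℝ)
    (hθ : ∀ n : ℤ, θ₀ ≠ (n : ℝ) * Real.pi / 2 ∧ θ₁ ≠ (n : ℝ) * Real.pi / 2)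
    (hθne : θ₀ ≠ θ₁)
    (α β : ℂ) (hαβ : Complex.normSq α + Complex.normSq β = 1)
    (ψ : ℕ → ℤ → Fin 2 → ℂ)
    (hinit : QWInit α β ψ)
    (hevol : QWEvolves (fun t => if Even t then Hcoin θ₀ else Hcoin θ₁) ψ)
    (r : ℕ) :
    Tendsto
      (fun t : ℕ => ∑' x : ℤ, ((x : ℝ) / (2 * (t : ℝ))) ^ r * qwProb ψ (2 * t) x)
      atTop
      (nhds (∫ x in (-(min |Real.cos θ₀| |Real.cos θ₁|))..(min |Real.cos θ₀| |Real.cos θ₁|),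
        x ^ r * (konnoDensity (min |Real.cos θ₀| |Real.cos θ₁|) x *
          (1 - (Complex.normSq α - Complex.normSq β +
            (α * (starRingEnd ℂ) β + (starRingEnd ℂ) α * β).re *
              (Real.sin θ₀ / Real.cos θ₀)) * x)))) := by
  have h₀ := TwoPeriodQW.cos_ne_zero_of_ne fun n => (hθ n).1
  have h₁ := TwoPeriodQW.cos_ne_zero_of_ne fun n => (hθ n).2
  have hs₀ := TwoPeriodQW.sin_ne_zero_of_ne fun n => (hθ n).1
  have hs₁ := TwoPeriodQW.sin_ne_zero_of_ne fun n => (hθ n).2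
  have h := TwoPeriodQW.tendsto_of_tendsto_fourier (TwoPeriodQW.empirical ψ)
    (TwoPeriodQW.limitFunctional θ₀ θ₁ hαβ)
    (TwoPeriodQW.norm_empirical_le hinit hαβ hevol) (TwoPeriodQW.norm_limitFunctional_le θ₀ θ₁ hαβ)
    (TwoPeriodQW.tendsto_empirical_fourier h₀ h₁ hαβ hinit hevol) (TwoPeriodQW.circleMonomial r)
  rw [← TwoPeriodQW.limitMoment_eq h₀ h₁ hs₀ hs₁ hαβ r]
  rw [TwoPeriodQW.limitFunctional_circleMonomial] at h
  simp only [TwoPeriodQW.tsum_eq_empirical_re hinit hevol]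
  exact (Complex.continuous_re.tendsto _).comp h
end
end

section
/- Let U = [[a,b],[c,d]] be a unitary 2×2 matrix, let κ₁ ∈ ℝ, and let w_t ∈ ℝ satisfy w_{t+1} + w_t = κ₁ for all t ≥ 0. Set U_t = [[a e^{i w_t}, b], [c, d e^{−i w_t}]] and R(k) = diag(e^{ik}, e^{−ik}). Then for every t ≥ 1 and every k, the product of time-evolution operators satisfies (R(k)U_{t−1})(R(k)U_{t−2})···(R(k)U₀) = R(−w_t/2) · (R(k + κ₁/2) U)^t · R(w₀/2); in particular, the Fourier transform of the walk satisfies Ψ̂_t(k) = R(−w_t/2) (R(k + κ₁/2) U)^t R(w₀/2) Ψ̂₀(k). -/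
open MeasureTheory Complex Filter

noncomputable section

/-- Ordered product `A_{t-1} ⬝ A_{t-2} ⬝ ⋯ ⬝ A₀` of a sequence of matrices. -/
def coinProd (A : ℕ → Matrix (Fin 2) (Fin 2) ℂ) : ℕ → Matrix (Fin 2) (Fin 2) ℂ
  | 0 => 1
  | t + 1 => A t * coinProd A t

theorem Rmat_zero : Rmat 0 = 1 := by
  simp [Rmat, Matrix.one_fin_two]

theorem Rmat_mul_Rmat (x y : ℝ) : Rmat x * Rmat y = Rmat (x + y) := by
  simp [Rmat, ← Complex.exp_add, mul_add, add_comm]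

theorem Rmat_mul_mul_Rmat_half (a b c d : ℂ) (x : ℝ) :
    Rmat (x / 2) * !![a, b; c, d] * Rmat (x / 2) =
      !![a * Complex.exp (Complex.I * x), b; c, d * Complex.exp (-(Complex.I * x))] := by
  have hsq : Complex.exp (Complex.I * x) =
      Complex.exp (Complex.I * (x / 2 : ℝ)) * Complex.exp (Complex.I * (x / 2 : ℝ)) := by
    rw [← Complex.exp_add]
    push_cast
    ring_nf
  have hne := Complex.exp_ne_zero (Complex.I * (x / 2 : ℝ))
  simp only [Rmat, Matrix.mul_fin_two, Complex.exp_neg, hsq]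
  ext i j
  fin_cases i <;> fin_cases j <;> simp <;> field_simp

theorem mulVec_coinProd_of_recurrence {A : ℕ → Matrix (Fin 2) (Fin 2) ℂ} {v : ℕ → Fin 2 → ℂ}
    (hv : ∀ t, v (t + 1) = (A t).mulVec (v t)) (t : ℕ) :
    v t = (coinProd A t).mulVec (v 0) := by
  induction t with
  | zero => simp [coinProd]
  | succ t ih => rw [hv, ih, Matrix.mulVec_mulVec, coinProd]

/-- For the Case-1 coin `U_t = [[a e^{iw_t}, b], [c, d e^{-iw_t}]]` with
`w_{t+1} + w_t = κ₁`:
`(R(k)U_{t-1})⋯(R(k)U₀) = R(-w_t/2) (R(k+κ₁/2) U)^t R(w₀/2)` for `t ≥ 1`; in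
particular the Fourier transform of the walk satisfies
`Ψ̂_t(k) = R(-w_t/2) (R(k+κ₁/2) U)^t R(w₀/2) Ψ̂₀(k)`. -/
theorem case1_QW_fourier_product
    (a b c d : ℂ) (U : Matrix (Fin 2) (Fin 2) ℂ) (hU : U = !![a, b; c, d])
    (hunit : Matrix.conjTranspose U * U = 1)
    (κ₁ : ℝ) (w : ℕ → ℝ) (hw : ∀ t : ℕ, w (t + 1) + w t = κ₁)
    (Useq : ℕ → Matrix (Fin 2) (Fin 2) ℂ)
    (hUseq : ∀ t : ℕ, Useq t =
      !![a * Complex.exp (Complex.I * (w t)), b;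
         c, d * Complex.exp (-(Complex.I * (w t)))])
    (k : ℝ) :
    (∀ t : ℕ, 1 ≤ t →
        coinProd (fun s => Rmat k * Useq s) t =
          Rmat (-(w t) / 2) * (Rmat (k + κ₁ / 2) * U) ^ t * Rmat (w 0 / 2)) ∧
    (∀ Ψhat : ℕ → Fin 2 → ℂ,
        (∀ t : ℕ, Ψhat (t + 1) = (Rmat k * Useq t).mulVec (Ψhat t)) →
        ∀ t : ℕ, 1 ≤ t →
          Ψhat t =
            (Rmat (-(w t) / 2) * (Rmat (k + κ₁ / 2) * U) ^ t * Rmat (w 0 / 2)).mulVec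
              (Ψhat 0)) := by
  have hprod : ∀ t : ℕ, coinProd (fun s => Rmat k * Useq s) t =
      Rmat (-(w t) / 2) * (Rmat (k + κ₁ / 2) * U) ^ t * Rmat (w 0 / 2) := by
    intro t
    induction t with
    | zero =>
      rw [pow_zero, mul_one, Rmat_mul_Rmat, neg_div, neg_add_cancel, Rmat_zero, coinProd]
    | succ t ih =>
      have hphase : k + w t / 2 = -(w (t + 1)) / 2 + (k + κ₁ / 2) := by
        linarith [hw t]
      have hcancel : Rmat (w t / 2) * Rmat (-(w t) / 2) = 1 := by
        rw [Rmat_mul_Rmat, neg_div, add_neg_cancel, Rmat_zero]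
      have hcoin : Rmat k * Useq t =
          Rmat (-(w (t + 1)) / 2) * (Rmat (k + κ₁ / 2) * U) * Rmat (w t / 2) := by
        rw [hUseq, ← Rmat_mul_mul_Rmat_half, ← hU, ← mul_assoc, ← mul_assoc, ← mul_assoc,
          Rmat_mul_Rmat, Rmat_mul_Rmat, hphase]
      rw [coinProd, ih, hcoin, pow_succ']
      simp only [mul_assoc]
      rw [← mul_assoc (Rmat (w t / 2)), hcancel, one_mul]
  refine ⟨fun t _ => hprod t, fun Ψhat hΨ t _ => ?_⟩
  rw [← hprod]
  exact mulVec_coinProd_of_recurrence hΨ t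
end
end

section
/- Let U = [[a,b],[c,d]] be a unitary 2×2 matrix, let κ₁ ∈ ℝ, and let w_t ∈ ℝ satisfy w_{t+1} + w_t = κ₁ for all t ≥ 0. Consider the time-dependent quantum walk on ℤ with coin sequence U_t = [[a e^{i w_t}, b], [c, d e^{−i w_t}]] and initial state ψ₀(0) = ᵀ(α, β), ψ₀(x) = 0 for x ≠ 0. Then for every t ≥ 0 and every x ∈ ℤ, P(X_t = x) = ‖ ∫₀^{2π} e^{ikx} (R(k)U)^t ᵀ(e^{i w₀/2} α, e^{−i w₀/2} β) dk/(2π) ‖²; that is, the position distribution of this time-dependent walk coincides at every time with that of the usual (time-independent) quantum walk with coin U started from the initial state ᵀ(e^{i w₀/2} α, e^{−i w₀/2} β) at the origin. -/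
open MeasureTheory Complex Filter

noncomputable section

/-- The amplitude at time `t` and site `x` of the usual walk with coin `U` started from the
state `v` at the origin, in its Fourier representation. -/
def usualAmplitude (U : Matrix (Fin 2) (Fin 2) ℂ) (v : Fin 2 → ℂ) (t : ℕ) (x : ℤ) (j : Fin 2) : ℂ :=
  ∫ k in (0:ℝ)..(2 * Real.pi),
    Complex.exp (Complex.I * k * x) * (((Rmat k * U) ^ t).mulVec v j) / (2 * Real.pi)

theorem continuous_Rmat : Continuous Rmat := by
  refine continuous_matrix fun i j => ?_
  fin_cases i <;> fin_cases j <;> simp only [Rmat] <;> simp <;> fun_prop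

theorem intervalIntegrable_usualAmplitude (U : Matrix (Fin 2) (Fin 2) ℂ) (v : Fin 2 → ℂ) (t : ℕ)
    (x : ℤ) (j : Fin 2) :
    IntervalIntegrable (fun k : ℝ => Complex.exp (Complex.I * k * x) *
      (((Rmat k * U) ^ t).mulVec v j) / (2 * Real.pi)) volume 0 (2 * Real.pi) := by
  have hR := continuous_Rmat
  have hM : Continuous fun k : ℝ => ((Rmat k * U) ^ t).mulVec v := by fun_prop
  have hj : Continuous fun k : ℝ => ((Rmat k * U) ^ t).mulVec v j := (continuous_apply j).comp hM
  apply Continuous.intervalIntegrable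
  fun_prop

theorem integral_exp_int_mul (x : ℤ) :
    ∫ k in (0:ℝ)..(2 * Real.pi), Complex.exp (Complex.I * k * x) =
      if x = 0 then (2 * Real.pi : ℂ) else 0 := by
  split_ifs with hx
  · simp [hx]
  · have hc : Complex.I * (x : ℂ) ≠ 0 := mul_ne_zero I_ne_zero (Int.cast_ne_zero.mpr hx)
    have he : Complex.exp (Complex.I * x * (2 * Real.pi)) = 1 := by
      rw [← Complex.exp_int_mul_two_pi_mul_I x]
      ring_nf
    have hk (k : ℝ) : Complex.I * k * x = Complex.I * x * k := by ring
    simp_rw [hk]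
    rw [integral_exp_mul_complex hc]
    simp [he]

theorem usualAmplitude_zero (U : Matrix (Fin 2) (Fin 2) ℂ) (v : Fin 2 → ℂ) (x : ℤ) (j : Fin 2) :
    usualAmplitude U v 0 x j = if x = 0 then v j else 0 := by
  have hpi : (Real.pi : ℂ) ≠ 0 := ofReal_ne_zero.mpr Real.pi_ne_zero
  simp only [usualAmplitude, pow_zero, Matrix.one_mulVec, mul_div_assoc]
  rw [intervalIntegral.integral_mul_const, integral_exp_int_mul]
  split_ifs
  · field_simp
  · simp

/-- The Fourier representation solves the evolution equation of the usual walk. -/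
theorem qwEvolves_usualAmplitude (U : Matrix (Fin 2) (Fin 2) ℂ) (v : Fin 2 → ℂ) :
    QWEvolves (fun _ => U) (usualAmplitude U v) := by
  intro t x
  have hI := intervalIntegrable_usualAmplitude U v t
  constructor
  · simp only [usualAmplitude]
    rw [← intervalIntegral.integral_const_mul, ← intervalIntegral.integral_const_mul,
      ← intervalIntegral.integral_add ((hI _ _).const_mul _) ((hI _ _).const_mul _)]
    congr 1 with k
    have he : Complex.exp (Complex.I * k * (x + 1 : ℤ)) =
        Complex.exp (Complex.I * k * x) * Complex.exp (Complex.I * k) := by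
      rw [← Complex.exp_add]
      push_cast
      ring_nf
    rw [he, pow_succ', ← Matrix.mulVec_mulVec, ← Matrix.mulVec_mulVec]
    simp [Rmat, Matrix.mulVec, dotProduct, Fin.sum_univ_two]
    ring
  · simp only [usualAmplitude]
    rw [← intervalIntegral.integral_const_mul, ← intervalIntegral.integral_const_mul,
      ← intervalIntegral.integral_add ((hI _ _).const_mul _) ((hI _ _).const_mul _)]
    congr 1 with k
    have he : Complex.exp (Complex.I * k * (x - 1 : ℤ)) =
        Complex.exp (Complex.I * k * x) * Complex.exp (-(Complex.I * k)) := by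
      rw [← Complex.exp_add]
      push_cast
      ring_nf
    rw [he, pow_succ', ← Matrix.mulVec_mulVec, ← Matrix.mulVec_mulVec]
    simp [Rmat, Matrix.mulVec, dotProduct, Fin.sum_univ_two]
    ring

/-- A gauge transformation turns the walk with alternating phases into a walk with a constant
coin. -/
theorem eq_phase_mul_of_qwEvolves {a b c d : ℂ} {κ : ℝ} {w : ℕ → ℝ}
    (hw : ∀ t : ℕ, w (t + 1) + w t = κ) {φ ψ : ℕ → ℤ → Fin 2 → ℂ}
    (hφ : QWEvolves (fun _ => !![a, b; c, d]) φ)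
    (hψ : QWEvolves (fun t => !![a * Complex.exp (Complex.I * (w t)), b;
      c, d * Complex.exp (-(Complex.I * (w t)))]) ψ)
    (h0 : ∀ x : ℤ,
      φ 0 x 0 = Complex.exp (((κ * x / 2 + w 0 / 2 : ℝ) : ℂ) * Complex.I) * ψ 0 x 0 ∧
      φ 0 x 1 = Complex.exp (((κ * x / 2 - w 0 / 2 : ℝ) : ℂ) * Complex.I) * ψ 0 x 1) (t : ℕ) :
    ∀ x : ℤ,
      φ t x 0 = Complex.exp (((κ * x / 2 + w t / 2 : ℝ) : ℂ) * Complex.I) * ψ t x 0 ∧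
      φ t x 1 = Complex.exp (((κ * x / 2 - w t / 2 : ℝ) : ℂ) * Complex.I) * ψ t x 1 := by
  induction t with
  | zero => exact h0
  | succ t ih =>
    intro x
    have hκ : (w (t + 1) : ℂ) = κ - w t := by
      rw [← hw t]
      push_cast
      ring
    constructor
    · rw [(hφ t x).1, (hψ t x).1, (ih (x + 1)).1, (ih (x + 1)).2]
      simp only [Matrix.of_apply, Matrix.cons_val_zero, Matrix.cons_val_one, Matrix.cons_val',
        Matrix.cons_val_fin_one]
      have h₁ : Complex.exp (((κ * (x + 1 : ℤ) / 2 + w t / 2 : ℝ) : ℂ) * Complex.I) =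
          Complex.exp (((κ * x / 2 + w (t + 1) / 2 : ℝ) : ℂ) * Complex.I) *
            Complex.exp (Complex.I * w t) := by
        rw [← Complex.exp_add]
        push_cast
        rw [hκ]
        ring_nf
      have h₂ : Complex.exp (((κ * (x + 1 : ℤ) / 2 - w t / 2 : ℝ) : ℂ) * Complex.I) =
          Complex.exp (((κ * x / 2 + w (t + 1) / 2 : ℝ) : ℂ) * Complex.I) := by
        push_cast
        rw [hκ]
        ring_nf
      rw [h₁, h₂]
      ring
    · rw [(hφ t x).2, (hψ t x).2, (ih (x - 1)).1, (ih (x - 1)).2]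
      simp only [Matrix.of_apply, Matrix.cons_val_zero, Matrix.cons_val_one, Matrix.cons_val',
        Matrix.cons_val_fin_one]
      have h₁ : Complex.exp (((κ * (x - 1 : ℤ) / 2 + w t / 2 : ℝ) : ℂ) * Complex.I) =
          Complex.exp (((κ * x / 2 - w (t + 1) / 2 : ℝ) : ℂ) * Complex.I) := by
        push_cast
        rw [hκ]
        ring_nf
      have h₂ : Complex.exp (((κ * (x - 1 : ℤ) / 2 - w t / 2 : ℝ) : ℂ) * Complex.I) =
          Complex.exp (((κ * x / 2 - w (t + 1) / 2 : ℝ) : ℂ) * Complex.I) *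
            Complex.exp (-(Complex.I * w t)) := by
        rw [← Complex.exp_add]
        push_cast
        rw [hκ]
        ring_nf
      rw [h₁, h₂]
      ring

theorem normSq_exp_ofReal_mul_I_mul (θ : ℝ) (z : ℂ) :
    Complex.normSq (Complex.exp ((θ : ℂ) * Complex.I) * z) = Complex.normSq z := by
  rw [map_mul, Complex.normSq_eq_norm_sq (Complex.exp _), Complex.norm_exp_ofReal_mul_I]
  simp

/-- Case 1 reduces to the usual walk: the position distribution of the walk with coin
`U_t = [[a e^{iw_t}, b], [c, d e^{-iw_t}]]`, `w_{t+1} + w_t = κ₁`, coincides at every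
time with that of the usual walk with coin `U` and initial state
`ᵀ(e^{iw₀/2} α, e^{-iw₀/2} β)` at the origin. -/
theorem case1_QW_equals_usual_walk
    (a b c d : ℂ) (U : Matrix (Fin 2) (Fin 2) ℂ) (hU : U = !![a, b; c, d])
    (hunit : Matrix.conjTranspose U * U = 1)
    (κ₁ : ℝ) (w : ℕ → ℝ) (hw : ∀ t : ℕ, w (t + 1) + w t = κ₁)
    (α β : ℂ) (hαβ : Complex.normSq α + Complex.normSq β = 1)
    (ψ : ℕ → ℤ → Fin 2 → ℂ)
    (hinit : QWInit α β ψ)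
    (hevol : QWEvolves
      (fun t => !![a * Complex.exp (Complex.I * (w t)), b;
                   c, d * Complex.exp (-(Complex.I * (w t)))]) ψ) :
    ∀ t : ℕ, ∀ x : ℤ,
      qwProb ψ t x =
        Complex.normSq (∫ k in (0:ℝ)..(2 * Real.pi),
          Complex.exp (Complex.I * k * x) *
            (((Rmat k * U) ^ t).mulVec
              ![Complex.exp (Complex.I * (w 0 / 2)) * α,
                Complex.exp (-(Complex.I * (w 0 / 2))) * β] 0) / (2 * Real.pi)) +
        Complex.normSq (∫ k in (0:ℝ)..(2 * Real.pi),
          Complex.exp (Complex.I * k * x) *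
            (((Rmat k * U) ^ t).mulVec
              ![Complex.exp (Complex.I * (w 0 / 2)) * α,
                Complex.exp (-(Complex.I * (w 0 / 2))) * β] 1) / (2 * Real.pi)) := by
  intro t x
  subst hU
  change _ = Complex.normSq (usualAmplitude _ _ t x 0) + Complex.normSq (usualAmplitude _ _ t x 1)
  obtain ⟨hα, hβ, hx⟩ := hinit
  have key := eq_phase_mul_of_qwEvolves hw (qwEvolves_usualAmplitude !![a, b; c, d]
    ![Complex.exp (Complex.I * (w 0 / 2)) * α, Complex.exp (-(Complex.I * (w 0 / 2))) * β])
    hevol (fun y => by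
      simp only [usualAmplitude_zero]
      by_cases hy : y = 0
      · subst hy
        simp [hα, hβ, mul_comm Complex.I]
      · simp [hy, hx y hy]) t x
  rw [key.1, key.2, normSq_exp_ofReal_mul_I_mul, normSq_exp_ofReal_mul_I_mul, qwProb]
end
end

section
/- Let U = [[a,b],[c,d]] be a unitary 2×2 matrix, let κ₂ ∈ ℝ, and let w_t = κ₂ t + w₀. Set U_t = [[a, b e^{i w_t}], [c e^{−i w_t}, d]] and R(k) = diag(e^{ik}, e^{−ik}). Then U_t = R(w_t/2) U R(−w_t/2), and for every t ≥ 1 and every k, (R(k)U_{t−1})(R(k)U_{t−2})···(R(k)U₀) = R(w_t/2) · (R(k − κ₂/2) U)^t · R(−w₀/2); in particular, the Fourier transform of the corresponding walk satisfies Ψ̂_t(k) = R(w_t/2) (R(k − κ₂/2) U)^t R(−w₀/2) Ψ̂₀(k). -/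
open MeasureTheory Complex Filter

noncomputable section

theorem Rmat_mul (k l : ℝ) : Rmat k * Rmat l = Rmat (k + l) := by
  simp [Rmat, ← Complex.exp_add, mul_add, add_comm]

/-- Conjugating by `R(θ/2)` multiplies the off-diagonal entries by `e^{±iθ}`. -/
theorem Rmat_conj (a b c d : ℂ) (θ : ℝ) :
    Rmat (θ / 2) * !![a, b; c, d] * Rmat (-θ / 2) =
      !![a, b * Complex.exp (Complex.I * θ); c * Complex.exp (-(Complex.I * θ)), d] := by
  have h : Complex.exp (Complex.I * θ) =
      Complex.exp (Complex.I * (θ / 2)) * Complex.exp (Complex.I * (θ / 2)) := by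
    rw [← Complex.exp_add]
    ring_nf
  have hne := Complex.exp_ne_zero (Complex.I * (θ / 2))
  simp only [Rmat, Matrix.mul_fin_two, Complex.ofReal_div, Complex.ofReal_neg,
    Complex.ofReal_ofNat, neg_div, mul_neg, neg_neg, Complex.exp_neg, h]
  ext i j
  fin_cases i <;> fin_cases j <;> simp <;> field_simp

/-- A product of conjugates of `U` by `R(w_s/2)` telescopes when `w` has constant increments. -/
theorem coinProd_Rmat_conj (U : Matrix (Fin 2) (Fin 2) ℂ) (k κ : ℝ) (w : ℕ → ℝ)
    (hw : ∀ t, w (t + 1) = w t + κ) (t : ℕ) :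
    coinProd (fun s => Rmat k * (Rmat (w s / 2) * U * Rmat (-(w s) / 2))) t =
      Rmat (w t / 2) * (Rmat (k - κ / 2) * U) ^ t * Rmat (-(w 0) / 2) := by
  induction t with
  | zero =>
    rw [coinProd, pow_zero, mul_one, Rmat_mul, ← add_div, add_neg_cancel, zero_div, Rmat_zero]
  | succ t ih =>
    have hcancel : Rmat (-(w t) / 2) * Rmat (w t / 2) = 1 := by
      rw [Rmat_mul, ← add_div, neg_add_cancel, zero_div, Rmat_zero]
    have hshift : Rmat k * Rmat (w t / 2) = Rmat (w (t + 1) / 2) * Rmat (k - κ / 2) := by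
      rw [Rmat_mul, Rmat_mul, hw]
      ring_nf
    calc
      _ = Rmat k * Rmat (w t / 2) * U * (Rmat (-(w t) / 2) * Rmat (w t / 2)) *
            (Rmat (k - κ / 2) * U) ^ t * Rmat (-(w 0) / 2) := by
        rw [coinProd, ih]
        simp only [mul_assoc]
      _ = _ := by
        rw [hcancel, hshift, pow_succ']
        simp only [mul_assoc, mul_one]

theorem eq_coinProd_mulVec (A : ℕ → Matrix (Fin 2) (Fin 2) ℂ) (v : ℕ → Fin 2 → ℂ)
    (hv : ∀ t, v (t + 1) = (A t).mulVec (v t)) (t : ℕ) :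
    v t = (coinProd A t).mulVec (v 0) := by
  induction t with
  | zero => rw [coinProd, Matrix.one_mulVec]
  | succ t ih => rw [hv, ih, coinProd, Matrix.mulVec_mulVec]

/-- For the Case-2 coin `U_t = [[a, b e^{iw_t}], [c e^{-iw_t}, d]]` with
`w_t = κ₂ t + w₀`: `U_t = R(w_t/2) U R(-w_t/2)`, and
`(R(k)U_{t-1})⋯(R(k)U₀) = R(w_t/2) (R(k-κ₂/2) U)^t R(-w₀/2)` for `t ≥ 1`; in
particular `Ψ̂_t(k) = R(w_t/2) (R(k-κ₂/2) U)^t R(-w₀/2) Ψ̂₀(k)`. -/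
theorem case2_QW_fourier_product
    (a b c d : ℂ) (U : Matrix (Fin 2) (Fin 2) ℂ) (hU : U = !![a, b; c, d])
    (hunit : Matrix.conjTranspose U * U = 1)
    (κ₂ w₀ : ℝ) (w : ℕ → ℝ) (hw : ∀ t : ℕ, w t = κ₂ * t + w₀)
    (Useq : ℕ → Matrix (Fin 2) (Fin 2) ℂ)
    (hUseq : ∀ t : ℕ, Useq t =
      !![a, b * Complex.exp (Complex.I * (w t));
         c * Complex.exp (-(Complex.I * (w t))), d])
    (k : ℝ) :
    (∀ t : ℕ, Useq t = Rmat (w t / 2) * U * Rmat (-(w t) / 2)) ∧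
    (∀ t : ℕ, 1 ≤ t →
        coinProd (fun s => Rmat k * Useq s) t =
          Rmat (w t / 2) * (Rmat (k - κ₂ / 2) * U) ^ t * Rmat (-(w 0) / 2)) ∧
    (∀ Ψhat : ℕ → Fin 2 → ℂ,
        (∀ t : ℕ, Ψhat (t + 1) = (Rmat k * Useq t).mulVec (Ψhat t)) →
        ∀ t : ℕ, 1 ≤ t →
          Ψhat t =
            (Rmat (w t / 2) * (Rmat (k - κ₂ / 2) * U) ^ t * Rmat (-(w 0) / 2)).mulVec
              (Ψhat 0)) := by
  have hconj (t : ℕ) : Useq t = Rmat (w t / 2) * U * Rmat (-(w t) / 2) := by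
    rw [hUseq, hU, Rmat_conj]
  have hstep (t : ℕ) : w (t + 1) = w t + κ₂ := by
    rw [hw, hw]
    push_cast
    ring
  have hprod (t : ℕ) : coinProd (fun s => Rmat k * Useq s) t =
      Rmat (w t / 2) * (Rmat (k - κ₂ / 2) * U) ^ t * Rmat (-(w 0) / 2) := by
    simp only [hconj]
    exact coinProd_Rmat_conj U k κ₂ w hstep t
  refine ⟨hconj, fun t _ => hprod t, fun Ψhat hΨ t _ => ?_⟩
  rw [← hprod]
  exact eq_coinProd_mulVec _ Ψhat hΨ t
end
end
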